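/- Let G be an Artin group of large type satisfying the (3,3,m)-hypothesis (no pairwise distinct indices i, j, k with m_{ij} = m_{ik} = 3 and m_{jk} < ∞), let g ∈ G and let i ≠ j. Then either (1) every geodesic word representing g has a prefix representing LD_{ij}(g); or (2) there exist a letter a ∈ {x_i^{±1}, x_j^{±1}}, unique with this property, and an element h' ∈ G(i,j) such that for every geodesic word w representing g, writing u ∈ G(i,j) for the element represented by the maximal {x_i,x_j}-prefix of w, there are integers r, s ≥ 0 with LD_{ij}(g) = u a^r and u = h' a^s in G. -/

import Mathlib

namespace ArtinRD

/-- The alternating product `xyxy...` with `m` factors, starting with `x`. -/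
def altProd {G : Type*} [Monoid G] : ℕ → G → G → G
  | 0, _, _ => 1
  | n + 1, x, y => x * altProd n y x

/-- The Artin relators determined by a Coxeter-type matrix `M` (`⊤` meaning `∞`). -/
def artinRels (n : ℕ) (M : Fin n → Fin n → ℕ∞) : Set (FreeGroup (Fin n)) :=
  {r | ∃ i j : Fin n, i ≠ j ∧ ∃ m : ℕ, M i j = (m : ℕ∞) ∧
    r = altProd m (FreeGroup.of i) (FreeGroup.of j) *
        (altProd m (FreeGroup.of j) (FreeGroup.of i))⁻¹}

/-- The Artin group associated to the matrix `M`. -/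
abbrev ArtinGroup (n : ℕ) (M : Fin n → Fin n → ℕ∞) : Type := PresentedGroup (artinRels n M)

/-- The standard generator `x_i` of the Artin group. -/
def gen (n : ℕ) (M : Fin n → Fin n → ℕ∞) (i : Fin n) : ArtinGroup n M := PresentedGroup.of i

/-- The set `A = {x_1^{±1}, ..., x_n^{±1}}` of standard letters. -/
def genSet (n : ℕ) (M : Fin n → Fin n → ℕ∞) : Set (ArtinGroup n M) :=
  {g | ∃ i : Fin n, g = gen n M i ∨ g = (gen n M i)⁻¹}

/-- Word length of `g` with respect to a set `S`: the least `N` such that `g` is a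
product of `N` elements of `S`. -/
noncomputable def wordLength {G : Type*} [Group G] (S : Set G) (g : G) : ℕ :=
  sInf {N : ℕ | ∃ w : List G, (∀ a ∈ w, a ∈ S) ∧ w.length = N ∧ w.prod = g}

/-- The word length on an Artin group with respect to the standard letters. -/
noncomputable def ℓA (n : ℕ) (M : Fin n → Fin n → ℕ∞) : ArtinGroup n M → ℕ :=
  wordLength (genSet n M)

/-- A letter: a generator index together with a sign (`true` = positive). -/
abbrev Letter (n : ℕ) := Fin n × Bool

/-- The group element corresponding to a letter. -/
def toGen (n : ℕ) (M : Fin n → Fin n → ℕ∞) (l : Letter n) : ArtinGroup n M :=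
  if l.2 then gen n M l.1 else (gen n M l.1)⁻¹

/-- The group element represented by a word over the letters. -/
def wordElt (n : ℕ) (M : Fin n → Fin n → ℕ∞) (w : List (Letter n)) : ArtinGroup n M :=
  (w.map (toGen n M)).prod

/-- A word is geodesic if its length equals the word length of the element it represents. -/
def IsGeodesic (n : ℕ) (M : Fin n → Fin n → ℕ∞) (w : List (Letter n)) : Prop :=
  wordLength (genSet n M) (wordElt n M w) = w.length

/-- `h` is a left divisor of `g`: the factorisation `g = h ⬝ (h⁻¹ g)` is geodesic. -/
def IsLeftDiv {G : Type*} [Group G] (ℓ : G → ℕ) (h g : G) : Prop :=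
  ℓ h + ℓ (h⁻¹ * g) = ℓ g

/-- `h` is a right divisor of `g`: the factorisation `g = (g h⁻¹) ⬝ h` is geodesic. -/
def IsRightDiv {G : Type*} [Group G] (ℓ : G → ℕ) (h g : G) : Prop :=
  ℓ (g * h⁻¹) + ℓ h = ℓ g

/-- The two-generator ("dihedral") subgroup `G(i,j)`. -/
def Gij (n : ℕ) (M : Fin n → Fin n → ℕ∞) (i j : Fin n) : Subgroup (ArtinGroup n M) :=
  Subgroup.closure {gen n M i, gen n M j}

/-- The letters `x_i^{±1}, x_j^{±1}` as group elements. -/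
def lettersIJ (n : ℕ) (M : Fin n → Fin n → ℕ∞) (i j : Fin n) : Set (ArtinGroup n M) :=
  {gen n M i, (gen n M i)⁻¹, gen n M j, (gen n M j)⁻¹}

/-- The maximal `{x_i,x_j}`-prefix of a word. -/
def ijPrefix (n : ℕ) (i j : Fin n) (w : List (Letter n)) : List (Letter n) :=
  w.takeWhile (fun l => l.1 == i || l.1 == j)

/-- `h` is a left divisor of `g` lying in `G(i,j)` of maximal word length. -/
def IsMaxLD (n : ℕ) (M : Fin n → Fin n → ℕ∞) (i j : Fin n) (g h : ArtinGroup n M) : Prop :=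
  h ∈ Gij n M i j ∧ IsLeftDiv (ℓA n M) h g ∧
    ∀ h' ∈ Gij n M i j, IsLeftDiv (ℓA n M) h' g → ℓA n M h' ≤ ℓA n M h

/-- `h` is a right divisor of `g` lying in `G(i,j)` of maximal word length. -/
def IsMaxRD (n : ℕ) (M : Fin n → Fin n → ℕ∞) (i j : Fin n) (g h : ArtinGroup n M) : Prop :=
  h ∈ Gij n M i j ∧ IsRightDiv (ℓA n M) h g ∧
    ∀ h' ∈ Gij n M i j, IsRightDiv (ℓA n M) h' g → ℓA n M h' ≤ ℓA n M h

end ArtinRD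

namespace ArtinRD

/-! ### Alternating products -/

theorem altProd_succ_right {G : Type*} [Monoid G] (k : ℕ) : ∀ p q : G,
    altProd (k + 1) p q = altProd k p q * (if Even k then p else q) := by
  induction k with
  | zero => intro p q; simp [altProd]
  | succ k ih =>
    intro p q
    have h1 : altProd (k + 1 + 1) p q = p * altProd (k + 1) q p := rfl
    have h2 : altProd (k + 1) p q = p * altProd k q p := rfl
    rw [h1, ih q p, h2, mul_assoc]
    congr 2
    by_cases hk : Even k <;> simp [hk, Nat.even_add_one]

/-! ### The state machine for dihedral Artin groups -/

inductive St where
  | emp (k : ℤ) : St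
  | run (f : Bool) (r : ℕ) (rs : List ℕ) (k : ℤ) : St

namespace St

def mk (f : Bool) : List ℕ → ℤ → St
  | [], k => emp k
  | r :: rs, k => run f r rs k

def pos (m : ℕ) (z : Bool) : St → St
  | emp k => run z 1 [] k
  | run f r rs k =>
    if f = z then run z 1 (r :: rs) k
    else if r + 1 < m then run z (r + 1) rs k
    else mk f rs (k + 1)

def neg (m : ℕ) (z : Bool) : St → St
  | emp k => run (!z) (m - 1) [] (k - 1)
  | run f r rs k =>
    if f = z then (if r = 1 then mk z rs k else run (!z) (r - 1) rs k)
    else run f (m - 1) (r :: rs) (k - 1)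

def Valid (m : ℕ) : St → Prop
  | emp _ => True
  | run _ r rs _ => ∀ q ∈ r :: rs, 1 ≤ q ∧ q < m

theorem valid_mk {m f rs k} (h : ∀ q ∈ rs, 1 ≤ q ∧ q < m) : Valid m (mk f rs k) := by
  cases rs with
  | nil => trivial
  | cons r rs => exact h

theorem valid_pos {m z s} (hm : 2 ≤ m) (h : Valid m s) : Valid m (pos m z s) := by
  cases s with
  | emp k => intro q hq; simp at hq; omega
  | run f r rs k =>
    simp only [Valid, List.mem_cons, forall_eq_or_imp] at h
    simp only [pos]
    split_ifs with h1 h2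
    · simp only [Valid, List.mem_cons, forall_eq_or_imp]
      exact ⟨by omega, h⟩
    · simp only [Valid, List.mem_cons, forall_eq_or_imp]
      exact ⟨by omega, h.2⟩
    · exact valid_mk h.2

theorem valid_neg {m z s} (hm : 2 ≤ m) (h : Valid m s) : Valid m (neg m z s) := by
  cases s with
  | emp k => intro q hq; simp at hq; omega
  | run f r rs k =>
    simp only [Valid, List.mem_cons, forall_eq_or_imp] at h
    simp only [neg]
    split_ifs with h1 h2
    · exact valid_mk h.2
    · simp only [Valid, List.mem_cons, forall_eq_or_imp]
      exact ⟨by omega, h.2⟩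
    · simp only [Valid, List.mem_cons, forall_eq_or_imp]
      exact ⟨by omega, h⟩

theorem neg_pos {m z s} (hm : 2 ≤ m) (h : Valid m s) : neg m z (pos m z s) = s := by
  cases s with
  | emp k => simp [pos, neg, mk]
  | run f r rs k =>
    simp only [Valid, List.mem_cons, forall_eq_or_imp] at h
    simp only [pos]
    split_ifs with h1 h2
    · simp [neg, mk, h1]
    · have : f = !z := by cases f <;> cases z <;> simp_all
      have h3 : r ≠ 0 := by omega
      simp [neg, h3, this]
    · have : f = !z := by cases f <;> cases z <;> simp_all
      have h3 : r = m - 1 := by omega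
      subst this
      cases rs with
      | nil => simp [mk, neg, h3]
      | cons r' rs => simp [mk, neg, h3]

theorem pos_neg {m z s} (hm : 2 ≤ m) (h : Valid m s) : pos m z (neg m z s) = s := by
  cases s with
  | emp k =>
    have : ¬ (m - 1 + 1 < m) := by omega
    simp [pos, neg, mk, this]
  | run f r rs k =>
    simp only [Valid, List.mem_cons, forall_eq_or_imp] at h
    simp only [neg]
    split_ifs with h1 h2
    · cases rs <;> simp [pos, mk, h1, h2]
    · have h3 : r - 1 + 1 = r := by omega
      simp [pos, h1, h3, h.1.2]
    · have : ¬ (m - 1 + 1 < m) := by omega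
      simp [pos, h1, mk, this]

/-- The coordinates. -/
def d : St → ℕ → ℤ
  | emp k, _ => k
  | run _ r rs k, t => k + ((r :: rs).countP (fun q => t ≤ q) : ℤ)

theorem d_mk (f rs k t) : d (mk f rs k) t = k + (rs.countP (fun q => t ≤ q) : ℤ) := by
  cases rs <;> simp [mk, d]

theorem d_anti (s : St) {t t' : ℕ} (h : t ≤ t') : d s t' ≤ d s t := by
  cases s with
  | emp k => simp [d]
  | run f r rs k =>
    simp only [d]
    have : (r :: rs).countP (fun q => decide (t' ≤ q)) ≤ (r :: rs).countP (fun q => decide (t ≤ q)) := by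
      apply List.countP_mono_left
      intro q _ hq
      simp at hq ⊢; omega
    omega

def pidx (z : Bool) : St → ℕ
  | emp _ => 1
  | run f r _ _ => if f = z then 1 else r + 1

def nidx (m : ℕ) (z : Bool) : St → ℕ
  | emp _ => m
  | run f r _ _ => if f = z then r else m

theorem countP_cons_int (r : ℕ) (rs : List ℕ) (t : ℕ) :
    ((r :: rs).countP (fun q => decide (t ≤ q)) : ℤ)
      = (rs.countP (fun q => decide (t ≤ q)) : ℤ) + if t ≤ r then 1 else 0 := by
  rw [List.countP_cons]; split_ifs <;> simp_all

theorem countP_big {m : ℕ} {rs : List ℕ} (h : ∀ q ∈ rs, 1 ≤ q ∧ q < m) :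
    (rs.countP (fun q => decide (m ≤ q))) = 0 := by
  rw [List.countP_eq_zero]; intro q hq; have := h q hq; simp; omega

theorem d_pos {m z s t} (hm : 2 ≤ m) (h : Valid m s) (ht : 1 ≤ t) (htm : t ≤ m) :
    d (pos m z s) t = d s t + if t = pidx z s then 1 else 0 := by
  cases s with
  | emp k =>
    simp only [pos, pidx, d, countP_cons_int]
    simp; split_ifs <;> omega
  | run f r rs k =>
    simp only [Valid, List.mem_cons, forall_eq_or_imp] at h
    simp only [pos, pidx]
    split_ifs with h1 h2 h3 h4 h5 h6 h7 <;>
      (try rw [d_mk]) <;> simp only [d, countP_cons_int] <;> split_ifs <;> omega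

theorem d_neg {m z s t} (hm : 2 ≤ m) (h : Valid m s) (ht : 1 ≤ t) (htm : t ≤ m) :
    d (neg m z s) t = d s t - if t = nidx m z s then 1 else 0 := by
  cases s with
  | emp k =>
    simp only [neg, nidx, d, countP_cons_int]
    simp; split_ifs <;> omega
  | run f r rs k =>
    simp only [Valid, List.mem_cons, forall_eq_or_imp] at h
    simp only [neg, nidx]
    split_ifs with h1 h2 h3 h4 h5 h6 h7 <;>
      (try rw [d_mk]) <;> simp only [d, countP_cons_int] <;> split_ifs <;> omega

theorem pidx_mem {m z s} (hm : 2 ≤ m) (h : Valid m s) : 1 ≤ pidx z s ∧ pidx z s ≤ m := by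
  cases s with
  | emp k => simp [pidx]; omega
  | run f r rs k =>
    simp only [Valid, List.mem_cons, forall_eq_or_imp] at h
    simp only [pidx]; split_ifs <;> omega

theorem nidx_mem {m z s} (hm : 2 ≤ m) (h : Valid m s) : 1 ≤ nidx m z s ∧ nidx m z s ≤ m := by
  cases s with
  | emp k => simp [nidx]; omega
  | run f r rs k =>
    simp only [Valid, List.mem_cons, forall_eq_or_imp] at h
    simp only [nidx]; split_ifs <;> omega

def Ls (m : ℕ) (s : St) : ℕ := ∑ t ∈ Finset.Icc 1 m, (d s t).natAbs

theorem Ls_change {m : ℕ} {s s' : St} {i : ℕ} {e : ℤ} (hi : 1 ≤ i) (him : i ≤ m)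
    (h : ∀ t, 1 ≤ t → t ≤ m → d s' t = d s t + if t = i then e else 0) :
    (Ls m s' : ℤ) - Ls m s = (d s i + e).natAbs - (d s i).natAbs := by
  have hmem : i ∈ Finset.Icc 1 m := by simp; omega
  unfold Ls
  rw [← Finset.add_sum_erase _ _ hmem, ← Finset.add_sum_erase _ (fun t => (d s t).natAbs) hmem]
  have : ∑ x ∈ (Finset.Icc 1 m).erase i, (d s' x).natAbs
      = ∑ x ∈ (Finset.Icc 1 m).erase i, (d s x).natAbs := by
    apply Finset.sum_congr rfl
    intro x hx
    simp at hx
    rw [h x hx.2.1 hx.2.2]; simp [hx.1]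
  rw [this, h i hi him]
  simp

theorem Ls_pos {m z s} (hm : 2 ≤ m) (h : Valid m s) :
    (0 ≤ d s (pidx z s) → Ls m (pos m z s) = Ls m s + 1) ∧
    (d s (pidx z s) < 0 → Ls m (pos m z s) + 1 = Ls m s) := by
  have := Ls_change (m := m) (pidx_mem (z := z) hm h).1 (pidx_mem hm h).2
    (fun t ht htm => d_pos (z := z) hm h ht htm)
  constructor <;> intro h' <;> omega

theorem Ls_neg {m z s} (hm : 2 ≤ m) (h : Valid m s) :
    (d s (nidx m z s) ≤ 0 → Ls m (neg m z s) = Ls m s + 1) ∧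
    (0 < d s (nidx m z s) → Ls m (neg m z s) + 1 = Ls m s) := by
  have := Ls_change (m := m) (s := s) (s' := neg m z s) (e := -1)
    (nidx_mem (z := z) hm h).1 (nidx_mem hm h).2
    (fun t ht htm => by rw [d_neg (z := z) hm h ht htm]; split_ifs <;> ring)
  constructor <;> intro h' <;> omega

/-- action of a signed letter -/
def act (m : ℕ) (a : Bool × Bool) (s : St) : St := if a.2 then pos m a.1 s else neg m a.1 s

theorem valid_act {m a s} (hm : 2 ≤ m) (h : Valid m s) : Valid m (act m a s) := by
  unfold act; split_ifs
  · exact valid_pos hm h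
  · exact valid_neg hm h

theorem Ls_act {m a s} (hm : 2 ≤ m) (h : Valid m s) :
    Ls m (act m a s) = Ls m s + 1 ∨ Ls m (act m a s) + 1 = Ls m s := by
  unfold act; split_ifs
  · have := Ls_pos (z := a.1) hm h
    rcases lt_or_ge (d s (pidx a.1 s)) 0 with h1 | h1
    · exact Or.inr (this.2 h1)
    · exact Or.inl (this.1 h1)
  · have := Ls_neg (z := a.1) hm h
    rcases le_or_gt (d s (nidx m a.1 s)) 0 with h1 | h1
    · exact Or.inl (this.1 h1)
    · exact Or.inr (this.2 h1)

theorem D0_pos {m z s} (hm : 2 ≤ m) (h : Valid m s) (h0 : Ls m (pos m z s) = Ls m s + 1) :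
    Ls m (pos m z (pos m z s)) = Ls m s + 2 := by
  have h1 : 0 ≤ d s (pidx z s) := by
    by_contra hc
    have := (Ls_pos (z := z) hm h).2 (by omega)
    omega
  have hv := valid_pos (z := z) hm h
  have hp := pidx_mem (z := z) hm h
  have hp' := pidx_mem (z := z) hm hv
  suffices 0 ≤ d (pos m z s) (pidx z (pos m z s)) by
    have := (Ls_pos (z := z) hm hv).1 this
    omega
  have h2 : d (pos m z s) (pidx z s) = d s (pidx z s) + 1 := by
    rw [d_pos hm h hp.1 hp.2]; simp
  have h3 : pidx z (pos m z s) = 1 ∨ pidx z s = m := by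
    cases s with
    | emp k => simp [pos, pidx]
    | run f r rs k =>
      simp only [Valid, List.mem_cons, forall_eq_or_imp] at h
      by_cases hf : f = z
      · simp [pos, pidx, hf]
      · by_cases hr : r + 1 < m
        · simp [pos, pidx, hf, hr]
        · right; simp [pidx, hf]; omega
  have h4 : pidx z (pos m z s) ≤ pidx z s := by omega
  have := d_anti (pos m z s) h4
  omega

theorem D0_act {m a s} (hm : 2 ≤ m) (h : Valid m s) (h0 : Ls m (act m a s) = Ls m s + 1) :
    Ls m (act m a (act m a s)) = Ls m s + 2 := by
  rcases hb : a with ⟨z, b⟩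
  subst hb
  cases b with
  | true => simpa [act] using D0_pos hm h (by simpa [act] using h0)
  | false =>
    rcases Ls_act (a := (z, false)) hm (valid_act (a := (z, false)) hm h) with h1 | h1
    · omega
    · exfalso
      simp only [act] at h0 h1
      simp at h0 h1
      have hv1 := valid_neg (z := z) hm h
      have hv2 := valid_neg (z := z) hm hv1
      have := D0_pos (z := z) hm hv2 (by rw [pos_neg hm hv1]; omega)
      rw [pos_neg hm hv1, pos_neg hm h] at this
      omega

theorem desc_act {m s} (hm : 2 ≤ m) (h : Valid m s) (hs : s ≠ emp 0) :
    ∃ a, Ls m (act m a s) + 1 = Ls m s := by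
  cases s with
  | emp k =>
    rcases lt_trichotomy k 0 with hk | hk | hk
    · exact ⟨(true, true), by simpa [act] using (Ls_pos (z := true) hm h).2 (by simpa [d] using hk)⟩
    · exact absurd (by rw [hk]) hs
    · exact ⟨(true, false), by simpa [act] using (Ls_neg (z := true) hm h).2 (by simpa [d] using hk)⟩
  | run f r rs k =>
    by_cases h1 : 0 < d (run f r rs k) r
    · exact ⟨(f, false), by simpa [act] using (Ls_neg (z := f) hm h).2 (by simpa [nidx] using h1)⟩
    · refine ⟨(!f, true), ?_⟩
      have h2 : d (run f r rs k) (r + 1) < d (run f r rs k) r := by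
        simp only [d, countP_cons_int]
        have : rs.countP (fun q => decide (r + 1 ≤ q)) ≤ rs.countP (fun q => decide (r ≤ q)) := by
          apply List.countP_mono_left
          intro q _ hq
          simp at hq ⊢; omega
        rw [if_neg (by omega : ¬ r + 1 ≤ r), if_pos le_rfl]; omega
      simpa [act] using (Ls_pos (z := !f) hm h).2 (by simp [pidx]; omega)

theorem Ls_zero {m s} (hm : 2 ≤ m) (h : Valid m s) (h0 : Ls m s = 0) : s = emp 0 := by
  by_contra hc
  obtain ⟨a, ha⟩ := desc_act hm h hc
  omega

/-! invariants along words with few syllables -/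

def Inv (m P N : ℕ) (a : Bool × Bool) (s : St) : Prop :=
  Valid m s ∧ P + N + 1 ≤ m ∧ (∀ t, 1 ≤ t → t ≤ m → P < t → d s t ≤ 0) ∧
  (∀ t, 1 ≤ t → t ≤ m → t + N ≤ m → 0 ≤ d s t) ∧
  ∃ r rs k, s = run (if a.2 then a.1 else !a.1) r rs k ∧
    (if a.2 then r ≤ P else m ≤ r + N)

theorem inv_base {m : ℕ} (hm : 2 ≤ m) (a : Bool × Bool) :
    Inv m (if a.2 then 1 else 0) (if a.2 then 0 else 1) a (act m a (emp 0)) := by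
  have hv : Valid m (emp 0) := trivial
  rcases a with ⟨z, b⟩
  cases b
  · refine ⟨valid_act hm hv, by simp; omega, ?_, ?_, m - 1, [], -1, by simp [act, neg], by simp; omega⟩
    · intro t h1 h2 h3
      simp only [act]
      simp only [Bool.false_eq_true, if_false]
      rw [d_neg hm hv h1 h2]; simp [d]; split_ifs <;> omega
    · intro t h1 h2 h3
      simp only [Bool.false_eq_true, if_false] at h3
      simp only [act]
      simp only [Bool.false_eq_true, if_false]
      rw [d_neg hm hv h1 h2]; simp [d, nidx]; omega
  · refine ⟨valid_act hm hv, by simp; omega, ?_, ?_, 1, [], 0, by simp [act, pos], by simp⟩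
    · intro t h1 h2 h3
      simp only [if_true] at h3
      simp only [act, if_true]
      rw [d_pos hm hv h1 h2]; simp [d, pidx]; omega
    · intro t h1 h2 h3
      simp only [act, if_true]
      rw [d_pos hm hv h1 h2]; simp [d]; split_ifs <;> omega

theorem inv_same {m P N : ℕ} {a : Bool × Bool} {s : St} (hm : 2 ≤ m) (h : Inv m P N a s) : Inv m P N a (act m a s) := by
  obtain ⟨hv, hPN, h1, h2, r, rs, k, rfl, hr⟩ := h
  have hv' := hv
  simp only [Valid, List.mem_cons, forall_eq_or_imp] at hv'
  rcases a with ⟨z, b⟩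
  cases b
  · simp only [Bool.false_eq_true, if_false] at hv hr h1 h2
    refine ⟨valid_act hm hv, hPN, ?_, ?_, m - 1, r :: rs, k - 1, by simp [act, neg], by simp; omega⟩
    · intro t h3 h4 h5
      have := h1 t h3 h4 h5
      simp only [act, Bool.false_eq_true, if_false]
      rw [d_neg hm hv h3 h4]; split_ifs <;> omega
    · intro t h3 h4 h5
      have := h2 t h3 h4 h5
      simp only [act, Bool.false_eq_true, if_false]
      rw [d_neg hm hv h3 h4]; simp [nidx]; omega
  · simp only [if_true] at hv hr h1 h2
    refine ⟨valid_act hm hv, hPN, ?_, ?_, 1, r :: rs, k, by simp [act, pos], by simp; omega⟩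
    · intro t h3 h4 h5
      have := h1 t h3 h4 h5
      simp only [act, if_true]
      rw [d_pos hm hv h3 h4]; simp [pidx]; omega
    · intro t h3 h4 h5
      have := h2 t h3 h4 h5
      simp only [act, if_true]
      rw [d_pos hm hv h3 h4]; split_ifs <;> omega

theorem inv_other {m P N : ℕ} {a b : Bool × Bool} {s : St} (hm : 2 ≤ m) (hab : b.1 ≠ a.1) (hPN' : P + N + 2 ≤ m)
    (h : Inv m P N a s) :
    Inv m (if b.2 then P + 1 else P) (if b.2 then N else N + 1) b (act m b s) := by
  obtain ⟨hv, hPN, h1, h2, r, rs, k, rfl, hr⟩ := h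
  have hv' := hv
  simp only [Valid, List.mem_cons, forall_eq_or_imp] at hv'
  rcases a with ⟨z, c⟩
  rcases b with ⟨z', c'⟩
  obtain rfl : z' = !z := by cases z <;> cases z' <;> simp_all
  cases c <;> cases c' <;> simp only [Bool.false_eq_true, if_false, if_true] at hv hr h1 h2 hv' ⊢
  · have hr1 : r ≠ 1 := by omega
    refine ⟨valid_act hm hv, by omega, ?_, ?_, r - 1, rs, k, by simp [act, neg, hr1], by simp; omega⟩
    · intro t h3 h4 h5
      have := h1 t h3 h4 h5
      simp only [act, Bool.false_eq_true, if_false]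
      rw [d_neg hm hv h3 h4]; split_ifs <;> omega
    · intro t h3 h4 h5
      have := h2 t h3 h4 (by omega)
      simp only [act, Bool.false_eq_true, if_false]
      rw [d_neg hm hv h3 h4]; simp [nidx]; omega
  · refine ⟨valid_act hm hv, by omega, ?_, ?_, 1, r :: rs, k, by simp [act, pos], by simp⟩
    · intro t h3 h4 h5
      have := h1 t h3 h4 (by omega)
      simp only [act, if_true]
      rw [d_pos hm hv h3 h4]; simp [pidx]; omega
    · intro t h3 h4 h5
      have := h2 t h3 h4 h5
      simp only [act, if_true]
      rw [d_pos hm hv h3 h4]; split_ifs <;> omega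
  · refine ⟨valid_act hm hv, by omega, ?_, ?_, m - 1, r :: rs, k - 1, by simp [act, neg], by simp; omega⟩
    · intro t h3 h4 h5
      have := h1 t h3 h4 h5
      simp only [act, Bool.false_eq_true, if_false]
      rw [d_neg hm hv h3 h4]; split_ifs <;> omega
    · intro t h3 h4 h5
      have := h2 t h3 h4 (by omega)
      simp only [act, Bool.false_eq_true, if_false]
      rw [d_neg hm hv h3 h4]; simp [nidx]; omega
  · have hr1 : r + 1 < m := by omega
    refine ⟨valid_act hm hv, by omega, ?_, ?_, r + 1, rs, k, by simp [act, pos, hr1], by simp; omega⟩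
    · intro t h3 h4 h5
      have := h1 t h3 h4 (by omega)
      simp only [act, if_true]
      rw [d_pos hm hv h3 h4]; simp [pidx]; omega
    · intro t h3 h4 h5
      have := h2 t h3 h4 h5
      simp only [act, if_true]
      rw [d_pos hm hv h3 h4]; split_ifs <;> omega

theorem inv_final {m P N : ℕ} {a b : Bool × Bool} {s : St} (hm : 2 ≤ m) (hab : b.1 ≠ a.1)
    (h : Inv m P N a s) : Ls m (act m b s) = Ls m s + 1 := by
  obtain ⟨hv, hPN, h1, h2, r, rs, k, rfl, hr⟩ := h
  have hv' := hv
  simp only [Valid, List.mem_cons, forall_eq_or_imp] at hv'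
  rcases a with ⟨z, c⟩
  rcases b with ⟨z', c'⟩
  obtain rfl : z' = !z := by cases z <;> cases z' <;> simp_all
  cases c <;> cases c' <;> simp only [Bool.false_eq_true, if_false, if_true, act] at hv hr h1 h2 hv' ⊢
  · refine (Ls_neg hm hv).1 (h1 _ (nidx_mem hm hv).1 (nidx_mem hm hv).2 ?_)
    simp [nidx]; omega
  · refine (Ls_pos hm hv).1 (h2 _ (pidx_mem hm hv).1 (pidx_mem hm hv).2 ?_)
    simp [pidx]; omega
  · refine (Ls_neg hm hv).1 (h1 _ (nidx_mem hm hv).1 (nidx_mem hm hv).2 ?_)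
    simp [nidx]; omega
  · refine (Ls_pos hm hv).1 (h2 _ (pidx_mem hm hv).1 (pidx_mem hm hv).2 ?_)
    simp [pidx]; omega

end St
end ArtinRD

namespace ArtinRD

namespace St

/-- alternating composition of positive letters on states -/
def alt (m : ℕ) : ℕ → Bool → St → St
  | 0, _, s => s
  | j + 1, e, s => pos m e (alt m j (!e) s)

theorem alt_emp {m : ℕ} (hm : 2 ≤ m) (k : ℤ) : ∀ j e, j ≤ m → alt m j e (emp k) =
    if j = 0 then emp k else if j < m then run e j [] k else emp (k + 1) := by
  intro j
  induction j with
  | zero => intro e _; simp [alt]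
  | succ j ih =>
    intro e hj
    rw [alt, ih (!e) (by omega)]
    by_cases h0 : j = 0
    · subst h0
      have h1 : 1 < m := by omega
      simp [pos, h1]
    · have h1 : j < m := by omega
      simp only [h0, h1, if_true, if_false]
      by_cases h2 : j + 1 < m <;> simp [pos, h2, mk]

theorem alt_run1 {m : ℕ} (hm : 2 ≤ m) (r : ℕ) (rs : List ℕ) (k : ℤ) : ∀ j e, j ≤ m →
    alt m j e (run (if Even j then !e else e) r rs k) =
    if j = 0 then run (!e) r rs k else if j < m then run e j (r :: rs) k
      else run (!e) r rs (k + 1) := by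
  intro j
  induction j with
  | zero => intro e _; simp [alt]
  | succ j ih =>
    intro e hj
    have h3 : (if Even (j + 1) then !e else e) = (if Even j then !(!e) else !e) := by
      by_cases hk : Even j <;> simp [hk, Nat.even_add_one]
    rw [alt, h3, ih (!e) (by omega)]
    by_cases h0 : j = 0
    · subst h0
      have h1 : 1 < m := by omega
      simp [pos, h1]
    · have h1 : j < m := by omega
      simp only [h0, h1, if_true, if_false]
      by_cases h2 : j + 1 < m <;> simp [pos, h2, mk]

theorem alt_run2 {m : ℕ} (hm : 2 ≤ m) (r : ℕ) (h1r : 1 ≤ r) (hr : r < m) (rs : List ℕ) (k : ℤ) :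
    ∀ j e, j ≤ m →
    alt m j e (run (if Even j then e else !e) r rs k) =
    if j + r < m then run e (j + r) rs k else if j + r = m then mk (!e) rs (k + 1)
      else run e (j + r - m) rs (k + 1) := by
  intro j
  induction j with
  | zero => intro e _; simp [alt, hr]
  | succ j ih =>
    intro e hj
    have h3 : (if Even (j + 1) then e else !e) = (if Even j then (!e) else !(!e)) := by
      by_cases hk : Even j <;> simp [hk, Nat.even_add_one]
    rw [alt, h3, ih (!e) (by omega)]
    by_cases h1 : j + r < m
    · simp only [h1, if_true]
      by_cases h2 : j + 1 + r < m
      · have h2' : j + r + 1 < m := by omega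
        simp [pos, h2, h2']; omega
      · have h2' : ¬ j + r + 1 < m := by omega
        have h4 : j + 1 + r = m := by omega
        simp [pos, h2', h4]
    · by_cases h2 : j + r = m
      · have h4 : j + 1 + r - m = 1 := by omega
        have h5 : ¬ j + 1 + r < m := by omega
        have h6 : ¬ j + 1 + r = m := by omega
        rw [if_neg h1, if_pos h2, if_neg h5, if_neg h6, h4]
        cases rs <;> simp [mk, pos]
      · have h4 : j + 1 + r - m = j + r - m + 1 := by omega
        have h5 : ¬ j + 1 + r < m := by omega
        have h6 : ¬ j + 1 + r = m := by omega
        have h7 : j + r - m + 1 < m := by omega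
        rw [if_neg h1, if_neg h2, if_neg h5, if_neg h6, h4]
        simp [pos, h7]

theorem alt_rel {m : ℕ} (hm : 2 ≤ m) {s : St} (h : Valid m s) (e : Bool) :
    alt m m e s = alt m m (!e) s := by
  have h0 : m ≠ 0 := by omega
  cases s with
  | emp k => rw [alt_emp hm k m e le_rfl, alt_emp hm k m _ le_rfl]; simp [h0]
  | run f r rs k =>
    simp only [Valid, List.mem_cons, forall_eq_or_imp] at h
    have a1 := fun e => alt_run1 hm r rs k m e le_rfl
    have a2 := fun e => alt_run2 hm r h.1.1 h.1.2 rs k m e le_rfl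
    have h1 : ¬ m + r < m := by omega
    have h2 : ¬ m + r = m := by omega
    have h3 : m + r - m = r := by omega
    simp only [h0, h1, h2, h3, if_false, lt_irrefl] at a1 a2
    by_cases hk : Even m <;> cases f <;> cases e <;>
      · have b1 := a1 true; have b2 := a1 false; have b3 := a2 true; have b4 := a2 false
        simp only [hk, if_true, if_false, Bool.not_true, Bool.not_false] at b1 b2 b3 b4 ⊢
        simp_all

def P (m : ℕ) (hm : 2 ≤ m) (z : Bool) : Equiv.Perm {s : St // Valid m s} where
  toFun s := ⟨pos m z s.1, valid_pos hm s.2⟩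
  invFun s := ⟨neg m z s.1, valid_neg hm s.2⟩
  left_inv s := Subtype.ext (neg_pos hm s.2)
  right_inv s := Subtype.ext (pos_neg hm s.2)

theorem altP {m : ℕ} (hm : 2 ≤ m) (s : {s : St // Valid m s}) : ∀ j e,
    (altProd j (P m hm e) (P m hm (!e)) s).1 = alt m j e s.1 := by
  intro j
  induction j with
  | zero => intro e; simp [altProd, alt]
  | succ j ih =>
    intro e
    have := ih (!e)
    rw [Bool.not_not] at this
    simp only [altProd, alt, ← this]
    rfl

theorem relP {m : ℕ} (hm : 2 ≤ m) :
    altProd m (P m hm true) (P m hm false) = altProd m (P m hm false) (P m hm true) := by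
  ext s : 2
  exact (altP hm s m true).trans ((alt_rel hm s.2 true).trans (altP hm s m false).symm)

/-! evaluation of states in a group -/
section Elt
variable {H : Type*} [Group H] (u : Bool → H) (m : ℕ)

def W : Bool → List ℕ → H
  | _, [] => 1
  | f, r :: rs => altProd r (u f) (u (!f)) * W (if Even r then !f else f) rs

def Dl : H := altProd m (u true) (u false)

def Elt : St → H
  | emp k => Dl u m ^ k
  | run f r rs k => W u f (r :: rs) * Dl u m ^ k

theorem Elt_mk (f rs k) : Elt u m (mk f rs k) = W u f rs * Dl u m ^ k := by
  cases rs <;> simp [mk, Elt, W]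

variable {u m}

theorem Dl_eq
    (hrel : altProd m (u true) (u false) = altProd m (u false) (u true)) (e : Bool) : altProd m (u e) (u (!e)) = Dl u m := by
  cases e
  · exact hrel.symm
  · rfl

def sg (m : ℕ) (z : Bool) : Bool := if Even m then z else !z

theorem sg_not (z : Bool) : sg m (!z) = !(sg m z) := by unfold sg; split_ifs <;> rfl

theorem Dl_u
    (hrel : altProd m (u true) (u false) = altProd m (u false) (u true)) (z : Bool) : Dl u m * u z = u (sg m z) * Dl u m := by
  have key : ∀ z, u z * Dl u m = Dl u m * u (sg m z) := by
    intro z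
    have h1 : altProd (m + 1) (u z) (u (!z)) = u z * altProd m (u (!z)) (u z) := rfl
    have h2 := altProd_succ_right m (u z) (u (!z))
    have h3 := Dl_eq hrel (!z)
    rw [Bool.not_not] at h3
    rw [h1, h3, Dl_eq hrel z] at h2
    rw [h2]; unfold sg; split_ifs <;> rfl
  rw [key (sg m z)]
  congr 2
  unfold sg; split_ifs <;> simp

theorem Dl_alt
    (hrel : altProd m (u true) (u false) = altProd m (u false) (u true)) (r : ℕ) : ∀ f, Dl u m * altProd r (u f) (u (!f)) =
    altProd r (u (sg m f)) (u (!(sg m f))) * Dl u m := by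
  induction r with
  | zero => intro f; simp [altProd]
  | succ r ih =>
    intro f
    have := ih (!f)
    rw [Bool.not_not, sg_not, Bool.not_not] at this
    simp only [altProd]
    rw [← mul_assoc, Dl_u hrel, mul_assoc, this, mul_assoc]

theorem Dl_W
    (hrel : altProd m (u true) (u false) = altProd m (u false) (u true)) (rs : List ℕ) : ∀ f, Dl u m * W u f rs = W u (sg m f) rs * Dl u m := by
  induction rs with
  | nil => intro f; simp [W]
  | cons r rs ih =>
    intro f
    simp only [W]
    rw [← mul_assoc, Dl_alt hrel, mul_assoc, ih, mul_assoc]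
    congr 3
    split_ifs
    · rw [sg_not]
    · rfl

theorem Elt_pos
    (hrel : altProd m (u true) (u false) = altProd m (u false) (u true)) (hm : 2 ≤ m) {z s} (h : Valid m s) : Elt u m (pos m z s) = u z * Elt u m s := by
  cases s with
  | emp k => simp [pos, Elt, W, altProd]
  | run f r rs k =>
    simp only [Valid, List.mem_cons, forall_eq_or_imp] at h
    simp only [pos]
    split_ifs with h1 h2
    · subst h1
      simp [Elt, W, altProd, mul_assoc]
    · obtain rfl : f = !z := by cases f <;> cases z <;> simp_all
      simp only [Elt, W, altProd, mul_assoc, Bool.not_not]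
      congr 4
      by_cases hk : Even r <;> simp [hk, Nat.even_add_one]
    · obtain rfl : f = !z := by cases f <;> cases z <;> simp_all
      obtain rfl : m = r + 1 := by omega
      rw [Elt_mk]
      have h3 := Dl_eq hrel z
      simp only [Elt, W]
      rw [← mul_assoc, ← mul_assoc]
      have h4 : u z * altProd r (u (!z)) (u (!!z)) = Dl u (r + 1) := by
        rw [← h3, Bool.not_not]; rfl
      rw [h4, Dl_W hrel, mul_assoc, add_comm k 1, zpow_add, zpow_one]
      congr 2
      by_cases hk : Even r <;> simp [hk, sg, Nat.even_add_one]

end Elt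
end St

/-! ### The interface for two-generator Artin groups -/

def lt {A : Type*} [Group A] (x : Bool → A) (a : Bool × Bool) : A :=
  if a.2 then x a.1 else (x a.1)⁻¹

structure Dih (m : ℕ∞) where
  A : Type
  grp : Group A
  x : Bool → A
  L : A → ℕ
  rel : ∀ k : ℕ, m = k → altProd k (x true) (x false) = altProd k (x false) (x true)
  univ : ∀ (H : Type) [Group H] (u : Bool → H),
    (∀ k : ℕ, m = k → altProd k (u true) (u false) = altProd k (u false) (u true)) →
    ∃ f : A →* H, ∀ z, f (x z) = u z
  L_one : L 1 = 0
  L_zero : ∀ h, L h = 0 → h = 1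
  step : ∀ a h, L (lt x a * h) = L h + 1 ∨ L (lt x a * h) + 1 = L h
  desc : ∀ h, h ≠ 1 → ∃ a, L (lt x a * h) + 1 = L h
  D0 : ∀ a h, L (lt x a * h) = L h + 1 → L (lt x a * (lt x a * h)) = L h + 2
  D2a : ∀ a b c s t, 1 ≤ s → c.1 ≠ a.1 → b.1 ≠ a.1 →
    L (lt x b * (lt x a ^ s * lt x c ^ t)) = L (lt x a ^ s * lt x c ^ t) + 1
  D2b : 4 ≤ m → ∀ a b c a' s t p, 1 ≤ s → 1 ≤ t → c.1 ≠ a.1 → a'.1 = a.1 → b.1 ≠ a.1 →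
    L (lt x b * (lt x a ^ s * (lt x c ^ t * lt x a' ^ p)))
      = L (lt x a ^ s * (lt x c ^ t * lt x a' ^ p)) + 1
  D3 : m = ⊤ → ∀ a b h, a.1 ≠ b.1 → ¬ (L (lt x a * h) + 1 = L h ∧ L (lt x b * h) + 1 = L h)

namespace DihFin
open St
section
variable (m : ℕ) (hm : 2 ≤ m)

def rels : Set (FreeGroup Bool) :=
  {altProd m (FreeGroup.of true) (FreeGroup.of false) *
    (altProd m (FreeGroup.of false) (FreeGroup.of true))⁻¹}

theorem map_altProd {G H : Type*} [Group G] [Group H] (f : G →* H) (k : ℕ) :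
    ∀ p q, f (altProd k p q) = altProd k (f p) (f q) := by
  induction k with
  | zero => intro p q; simp [altProd]
  | succ k ih => intro p q; simp [altProd, ih]

abbrev A := PresentedGroup (rels m)

theorem lift_rels {H : Type*} [Group H] (u : Bool → H)
    (h : altProd m (u true) (u false) = altProd m (u false) (u true)) :
    ∀ r ∈ rels m, FreeGroup.lift u r = 1 := by
  intro r hr
  rw [rels, Set.mem_singleton_iff] at hr
  subst hr
  simp [map_altProd, h]

def phi : A m →* Equiv.Perm {s : St // Valid m s} :=
  PresentedGroup.toGroup (lift_rels m (P m hm) (relP hm))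

def xx (z : Bool) : A m := PresentedGroup.of z

theorem phi_x (z : Bool) : phi m hm (xx m z) = P m hm z := PresentedGroup.toGroup.of _

def st (g : A m) : {s : St // Valid m s} := phi m hm g ⟨emp 0, trivial⟩

theorem st_lt (a : Bool × Bool) (g : A m) :
    (st m hm (lt (xx m) a * g)).1 = act m a (st m hm g).1 := by
  unfold st lt act
  rw [map_mul]
  split_ifs
  · rw [phi_x]; rfl
  · rw [map_inv, phi_x]; rfl

theorem relx : altProd m (xx m true) (xx m false) = altProd m (xx m false) (xx m true) := by
  have := PresentedGroup.one_of_mem (rels := rels m) (Set.mem_singleton _)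
  rw [map_mul, map_inv, map_altProd, map_altProd, mul_inv_eq_one] at this
  exact this

theorem Elt_phi (g : A m) : ∀ s, Elt (xx m) m (phi m hm g s).1 = g * Elt (xx m) m s.1 := by
  have hg : g ∈ Subgroup.closure (Set.range (PresentedGroup.of (rels := rels m))) := by
    rw [PresentedGroup.closure_range_of]; trivial
  induction hg using Subgroup.closure_induction with
  | mem g hg =>
    obtain ⟨z, rfl⟩ := hg
    intro s
    have := phi_x m hm z
    unfold xx at this
    rw [this]
    exact Elt_pos (relx m) hm s.2
  | one => intro s; simp
  | mul x y _ _ hx hy => intro s; rw [map_mul, mul_assoc, ← hy, ← hx]; rfl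
  | inv x _ hx =>
    intro s
    have := hx ((phi m hm x⁻¹) s)
    rw [← Equiv.Perm.mul_apply, ← map_mul, mul_inv_cancel, map_one, Equiv.Perm.one_apply] at this
    rw [this]; simp

def I (P N : ℕ) (a : Bool × Bool) (g : A m) : Prop := Inv m P N a (st m hm g).1

theorem I_pow {P N a g} (h : I m hm P N a g) (n : ℕ) : I m hm P N a (lt (xx m) a ^ n * g) := by
  induction n with
  | zero => simpa using h
  | succ n ih =>
    rw [pow_succ', mul_assoc]
    unfold I
    rw [st_lt]
    exact inv_same hm ih

theorem I_base (a : Bool × Bool) (n : ℕ) (hn : 1 ≤ n) :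
    ∃ P N, P + N = 1 ∧ I m hm P N a (lt (xx m) a ^ n) := by
  obtain ⟨n, rfl⟩ : ∃ k, n = k + 1 := ⟨n - 1, by omega⟩
  have h1 : (st m hm 1).1 = emp 0 := by simp [st]
  refine ⟨if a.2 then 1 else 0, if a.2 then 0 else 1, by split_ifs <;> rfl, ?_⟩
  rw [pow_succ]
  apply I_pow
  have := inv_base hm a
  unfold I
  rw [← mul_one (lt (xx m) a), st_lt, h1]
  exact this

theorem I_other {P N : ℕ} {a b : Bool × Bool} {g} (h : I m hm P N a g) (hab : b.1 ≠ a.1)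
    (hPN : P + N + 2 ≤ m) (n : ℕ) (hn : 1 ≤ n) :
    ∃ P' N', P' + N' = P + N + 1 ∧ I m hm P' N' b (lt (xx m) b ^ n * g) := by
  obtain ⟨n, rfl⟩ : ∃ k, n = k + 1 := ⟨n - 1, by omega⟩
  refine ⟨if b.2 then P + 1 else P, if b.2 then N else N + 1, by split_ifs <;> omega, ?_⟩
  rw [pow_succ, mul_assoc]
  apply I_pow
  unfold I
  rw [st_lt]
  exact inv_other hm hab hPN h

theorem I_final {P N : ℕ} {a b : Bool × Bool} {g} (h : I m hm P N a g) (hab : b.1 ≠ a.1) :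
    Ls m (st m hm (lt (xx m) b * g)).1 = Ls m (st m hm g).1 + 1 := by
  rw [st_lt]; exact inv_final hm hab h

theorem d2a (hm3 : 3 ≤ m) (a b c : Bool × Bool) (s t : ℕ) (hs : 1 ≤ s) (hc : c.1 ≠ a.1)
    (hb : b.1 ≠ a.1) :
    Ls m (st m hm (lt (xx m) b * (lt (xx m) a ^ s * lt (xx m) c ^ t))).1 =
      Ls m (st m hm (lt (xx m) a ^ s * lt (xx m) c ^ t)).1 + 1 := by
  rcases Nat.eq_zero_or_pos t with rfl | ht
  · obtain ⟨P, N, _, h⟩ := I_base m hm a s hs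
    rw [pow_zero, mul_one]
    exact I_final m hm h hb
  · obtain ⟨P, N, hPN, h⟩ := I_base m hm c t ht
    obtain ⟨P, N, _, h⟩ := I_other m hm h hc.symm (by omega) s hs
    exact I_final m hm h hb

theorem d2b (hm4 : 4 ≤ m) (a b c a' : Bool × Bool) (s t p : ℕ) (hs : 1 ≤ s) (ht : 1 ≤ t)
    (hc : c.1 ≠ a.1) (ha' : a'.1 = a.1) (hb : b.1 ≠ a.1) :
    Ls m (st m hm (lt (xx m) b * (lt (xx m) a ^ s * (lt (xx m) c ^ t * lt (xx m) a' ^ p)))).1 =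
      Ls m (st m hm (lt (xx m) a ^ s * (lt (xx m) c ^ t * lt (xx m) a' ^ p))).1 + 1 := by
  rcases Nat.eq_zero_or_pos p with rfl | hp
  · have := d2a m hm (by omega) a b c s t hs hc hb
    simpa using this
  · obtain ⟨P, N, hPN, h⟩ := I_base m hm a' p hp
    obtain ⟨P, N, _, h⟩ := I_other m hm h (b := c) (by rw [ha']; exact hc) (by omega) t ht
    obtain ⟨P, N, _, h⟩ := I_other m hm h hc.symm (by omega) s hs
    exact I_final m hm h hb

end

def dih (m : ℕ) (hm3 : 3 ≤ m) : Dih m :=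
  have hm : 2 ≤ m := by omega
  { A := A m
    grp := inferInstance
    x := xx m
    L := fun g => Ls m (st m hm g).1
    rel := by
      intro k hk
      have : m = k := by exact_mod_cast hk
      subst this; exact relx m
    univ := by
      intro H _ u hu
      refine ⟨PresentedGroup.toGroup (lift_rels m u (hu m rfl)), fun z => ?_⟩
      exact PresentedGroup.toGroup.of _
    L_one := by simp [st, Ls, d]
    L_zero := by
      intro h h0
      have h1 := Ls_zero hm (st m hm h).2 h0
      have h2 := Elt_phi m hm h ⟨emp 0, trivial⟩
      have h3 : ((phi m hm) h ⟨emp 0, trivial⟩).1 = emp 0 := h1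
      rw [h3] at h2
      simpa [Elt] using h2.symm
    step := by
      intro a h
      simp only [st_lt]
      exact Ls_act hm (st m hm h).2
    desc := by
      intro h hh
      simp only [st_lt]
      apply desc_act hm (st m hm h).2
      intro h1
      apply hh
      have h2 := Elt_phi m hm h ⟨emp 0, trivial⟩
      have h3 : ((phi m hm) h ⟨emp 0, trivial⟩).1 = emp 0 := h1
      rw [h3] at h2
      simpa [Elt] using h2.symm
    D0 := by
      intro a h
      simp only [st_lt]
      exact D0_act hm (st m hm h).2
    D2a := d2a m hm hm3
    D2b := by
      intro h4
      exact d2b m hm (by exact_mod_cast h4)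
    D3 := by
      intro h; exact absurd h (by simp) }

end DihFin
end ArtinRD

namespace ArtinRD
namespace DihFree

abbrev F := FreeGroup Bool
def xx (z : Bool) : F := FreeGroup.of z

theorem lt_mk (a : Bool × Bool) : lt xx a = FreeGroup.mk [a] := by
  rcases a with ⟨z, b⟩
  cases b <;> simp [lt, xx, FreeGroup.of, FreeGroup.invRev]

theorem toWord_lt (a : Bool × Bool) (g : F) : FreeGroup.toWord (lt xx a * g) =
    match FreeGroup.toWord g with
    | [] => [a]
    | hd :: tl => if a.1 = hd.1 ∧ a.2 = !hd.2 then tl else a :: hd :: tl := by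
  have h1 : lt xx a * g = FreeGroup.mk (a :: FreeGroup.toWord g) := by
    rw [lt_mk]
    conv_lhs => rw [← FreeGroup.mk_toWord (x := g)]
    rw [FreeGroup.mul_mk]; rfl
  rw [h1, FreeGroup.toWord_mk, FreeGroup.reduce.cons, FreeGroup.reduce_toWord]
  cases FreeGroup.toWord g <;> rfl

def L (g : F) : ℕ := (FreeGroup.toWord g).length

def Hd (a : Bool × Bool) (g : F) : Prop := ∃ tl, FreeGroup.toWord g = a :: tl

theorem hd_up {a : Bool × Bool} {g : F} (h : L (lt xx a * g) = L g + 1) : Hd a (lt xx a * g) := by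
  unfold L at h
  unfold Hd
  rw [toWord_lt] at h ⊢
  cases hg : FreeGroup.toWord g with
  | nil => exact ⟨[], rfl⟩
  | cons hd tl =>
    rw [hg] at h
    simp only at h ⊢
    split_ifs at h ⊢ with h1
    · simp at h; omega
    · exact ⟨_, rfl⟩

theorem up_of_hd {a b : Bool × Bool} {g : F} (h : Hd a g) (hab : ¬ (b.1 = a.1 ∧ b.2 = !a.2)) :
    L (lt xx b * g) = L g + 1 := by
  obtain ⟨tl, ht⟩ := h
  unfold L
  rw [toWord_lt, ht]
  simp [hab]

theorem hd_pow {a : Bool × Bool} {g : F} (h : Hd a g) (n : ℕ) : Hd a (lt xx a ^ n * g) := by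
  induction n with
  | zero => simpa using h
  | succ n ih =>
    rw [pow_succ', mul_assoc]
    exact hd_up (up_of_hd ih (by simp))

theorem hd_base (a : Bool × Bool) (n : ℕ) (hn : 1 ≤ n) : Hd a (lt xx a ^ n) := by
  obtain ⟨n, rfl⟩ : ∃ k, n = k + 1 := ⟨n - 1, by omega⟩
  rw [pow_succ]
  apply hd_pow
  have : Hd a (lt xx a * 1) := hd_up (by unfold L; rw [toWord_lt]; simp)
  simpa using this

theorem hd_other {a c : Bool × Bool} {g : F} (h : Hd c g) (hc : c.1 ≠ a.1) (n : ℕ) (hn : 1 ≤ n) :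
    Hd a (lt xx a ^ n * g) := by
  obtain ⟨n, rfl⟩ : ∃ k, n = k + 1 := ⟨n - 1, by omega⟩
  rw [pow_succ, mul_assoc]
  apply hd_pow
  exact hd_up (up_of_hd h (by rintro ⟨h1, _⟩; exact hc h1.symm))

theorem d2a (a b c : Bool × Bool) (s t : ℕ) (hs : 1 ≤ s) (hc : c.1 ≠ a.1)
    (hb : b.1 ≠ a.1) :
    L (lt xx b * (lt xx a ^ s * lt xx c ^ t)) = L (lt xx a ^ s * lt xx c ^ t) + 1 := by
  apply up_of_hd (a := a) _ (fun h => hb h.1)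
  rcases Nat.eq_zero_or_pos t with rfl | ht
  · simpa using hd_base a s hs
  · exact hd_other (hd_base c t ht) hc s hs

theorem d2b (a b c a' : Bool × Bool) (s t p : ℕ) (hs : 1 ≤ s) (ht : 1 ≤ t)
    (hc : c.1 ≠ a.1) (ha' : a'.1 = a.1) (hb : b.1 ≠ a.1) :
    L (lt xx b * (lt xx a ^ s * (lt xx c ^ t * lt xx a' ^ p))) =
      L (lt xx a ^ s * (lt xx c ^ t * lt xx a' ^ p)) + 1 := by
  rcases Nat.eq_zero_or_pos p with rfl | hp
  · simpa using d2a a b c s t hs hc hb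
  · apply up_of_hd (a := a) _ (fun h => hb h.1)
    apply hd_other _ hc s hs
    apply hd_other (hd_base a' p hp) (by rw [ha']; exact hc.symm) t ht

def dih : Dih ⊤ where
  A := F
  grp := inferInstance
  x := xx
  L := L
  rel := by intro k hk; exact absurd hk (by simp)
  univ := by
    intro H _ u _
    exact ⟨FreeGroup.lift u, fun z => by simp [xx]⟩
  L_one := by simp [L]
  L_zero := by
    intro h h0
    unfold L at h0
    rw [List.length_eq_zero_iff] at h0
    simpa using h0
  step := by
    intro a h
    unfold L
    rw [toWord_lt]
    cases FreeGroup.toWord h with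
    | nil => simp
    | cons hd tl => simp only; split_ifs <;> simp
  desc := by
    intro h hh
    unfold L
    simp only [toWord_lt]
    cases hg : FreeGroup.toWord h with
    | nil => exact absurd (by simpa using hg) hh
    | cons hd tl => exact ⟨(hd.1, !hd.2), by simp⟩
  D0 := by
    intro a h h0
    rw [up_of_hd (hd_up h0) (by simp), h0]
  D2a := d2a
  D2b := fun _ => d2b
  D3 := by
    rintro - a b h hab ⟨h1, h2⟩
    unfold L at h1 h2
    rw [toWord_lt] at h1 h2
    cases hg : FreeGroup.toWord h with
    | nil => rw [hg] at h1; simp at h1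
    | cons hd tl =>
      rw [hg] at h1 h2
      simp only at h1 h2
      split_ifs at h1 h2 with h3 h4
      · exact hab (h3.1.trans h4.1.symm)
      · simp at h2; omega
      · simp at h1; omega
      · simp at h1; omega

end DihFree

theorem nonempty_dih (m : ℕ∞) (h : 3 ≤ m) : Nonempty (Dih m) := by
  induction m using ENat.recTopCoe with
  | top => exact ⟨DihFree.dih⟩
  | coe m => exact ⟨DihFin.dih m (by exact_mod_cast h)⟩

end ArtinRD

namespace ArtinRD

variable {ι : Type}

/-- alternating words -/
def altw {α : Type*} : ℕ → α → α → List α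
  | 0, _, _ => []
  | k + 1, a, b => a :: altw k b a

def IJ (i j : ι) (α : List (ι × Bool)) : Prop := ∀ a ∈ α, a.1 = i ∨ a.1 = j

def linv (a : ι × Bool) : ι × Bool := (a.1, !a.2)

def lt' {H : Type*} [Group H] (u : ι → H) (a : ι × Bool) : H :=
  if a.2 then u a.1 else (u a.1)⁻¹

def wev {H : Type*} [Group H] (u : ι → H) (α : List (ι × Bool)) : H := (α.map (lt' u)).prod

structure Sys (ι : Type) (M : ι → ι → ℕ∞) where
  E : ι → ι → List (ι × Bool) → List (ι × Bool) → Prop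
  len : ι → ι → List (ι × Bool) → ℕ
  E_comm : ∀ {i j α β}, E i j α β → E j i α β
  len_comm : ∀ {i j α}, len i j α = len j i α
  refl : ∀ i j α, E i j α α
  symm : ∀ {i j α β}, E i j α β → E i j β α
  trans : ∀ {i j α β γ}, E i j α β → E i j β γ → E i j α γ
  app : ∀ {i j α α' β β'}, E i j α α' → E i j β β' → E i j (α ++ β) (α' ++ β')
  E_inv : ∀ i j a α, E i j (a :: linv a :: α) α
  E_len : ∀ {i j α β}, E i j α β → len i j α = len i j β
  len_nil : ∀ i j, len i j [] = 0
  len_zero : ∀ {i j α}, len i j α = 0 → E i j α []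
  step : ∀ i j a α, len i j (a :: α) = len i j α + 1 ∨ len i j (a :: α) + 1 = len i j α
  desc : ∀ {i j α}, i ≠ j → ¬ E i j α [] →
    ∃ a : ι × Bool, (a.1 = i ∨ a.1 = j) ∧ len i j (a :: α) + 1 = len i j α
  D0 : ∀ {i j a α}, len i j (a :: α) = len i j α + 1 → len i j (a :: a :: α) = len i j α + 2
  D2a : ∀ {i j : ι} {a b c : ι × Bool} {s : ℕ} (t : ℕ), i ≠ j → a.1 = i → b.1 = j → c.1 = j →
    1 ≤ s → len i j (b :: (List.replicate s a ++ List.replicate t c))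
      = len i j (List.replicate s a ++ List.replicate t c) + 1
  D2b : ∀ {i j : ι} {a b c a' : ι × Bool} {s t : ℕ} (p : ℕ), i ≠ j → 4 ≤ M i j →
    a.1 = i → b.1 = j → c.1 = j → a'.1 = i →
    1 ≤ s → 1 ≤ t →
    len i j (b :: (List.replicate s a ++ (List.replicate t c ++ List.replicate p a')))
      = len i j (List.replicate s a ++ (List.replicate t c ++ List.replicate p a')) + 1
  D3 : ∀ {i j : ι} {a b : ι × Bool} {α}, i ≠ j → M i j = ⊤ → a.1 = i → b.1 = j →
    len i j (a :: α) + 1 = len i j α → len i j (b :: α) + 1 = len i j α → False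
  rel : ∀ {i j : ι} {k : ℕ}, i ≠ j → M i j = k →
    E i j (altw k (i, true) (j, true)) (altw k (j, true) (i, true))
  sound : ∀ (H : Type) [Group H] (u : ι → H),
    (∀ i j (k : ℕ), i ≠ j → M i j = k → altProd k (u i) (u j) = altProd k (u j) (u i)) →
    ∀ {i j α β}, i ≠ j → IJ i j α → IJ i j β → E i j α β → wev u α = wev u β

section Inst
variable {n : ℕ} {M : Fin n → Fin n → ℕ∞} (hsymm : ∀ i j, M i j = M j i)
  (hlarge : ∀ i j, i ≠ j → 3 ≤ M i j)

def mm (M : Fin n → Fin n → ℕ∞) (p q : Fin n) : ℕ∞ := if p = q then ⊤ else M p q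

theorem mm_ge (hlarge : ∀ i j, i ≠ j → 3 ≤ M i j) (p q : Fin n) : 3 ≤ mm M p q := by
  unfold mm; split_ifs with h
  · exact le_top
  · exact hlarge p q h

theorem mm_minmax (hsymm : ∀ i j, M i j = M j i) {i j : Fin n} (h : i ≠ j) :
    mm M (min i j) (max i j) = M i j := by
  unfold mm
  rcases lt_or_gt_of_ne h with h1 | h1
  · simp [min_eq_left h1.le, max_eq_right h1.le, h]
  · simp [min_eq_right h1.le, max_eq_left h1.le, h.symm, hsymm i j]

noncomputable def DD (hlarge : ∀ i j, i ≠ j → 3 ≤ M i j) (p q : Fin n) : Dih (mm M p q) :=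
  Classical.choice (nonempty_dih _ (mm_ge hlarge p q))

noncomputable instance (p q : Fin n) : Group (DD hlarge p q).A := (DD hlarge p q).grp

def tag (p : Fin n) (l : Fin n × Bool) : Bool × Bool := (decide (l.1 = p), l.2)

noncomputable def evd (p q : Fin n) (α : List (Fin n × Bool)) : (DD hlarge p q).A :=
  (α.map (fun l => lt (DD hlarge p q).x (tag p l))).prod

theorem evd_cons (p q : Fin n) (a) (α : List (Fin n × Bool)) :
    evd hlarge p q (a :: α) = lt (DD hlarge p q).x (tag p a) * evd hlarge p q α := by
  simp [evd]

theorem evd_append (p q : Fin n) (α β : List (Fin n × Bool)) :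
    evd hlarge p q (α ++ β) = evd hlarge p q α * evd hlarge p q β := by
  simp [evd]

theorem evd_replicate (p q : Fin n) (a) (k : ℕ) :
    evd hlarge p q (List.replicate k a) = lt (DD hlarge p q).x (tag p a) ^ k := by
  simp [evd]

theorem evd_altw (p q : Fin n) (k : ℕ) : ∀ a b,
    evd hlarge p q (altw k a b) =
      altProd k (lt (DD hlarge p q).x (tag p a)) (lt (DD hlarge p q).x (tag p b)) := by
  induction k with
  | zero => intro a b; simp [altw, altProd, evd]
  | succ k ih => intro a b; simp [altw, altProd, evd_cons, ih]

theorem tag_min {i j : Fin n} (h : i ≠ j) : (decide (i = min i j)) ≠ decide (j = min i j) := by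
  rcases lt_or_gt_of_ne h with h1 | h1
  · simp [min_eq_left h1.le, h, h.symm]
  · simp [min_eq_right h1.le, h, h.symm]

theorem tag_min' {i j : Fin n} (h : i ≠ j) (z : Bool) :
    ∃ k, (k = i ∨ k = j) ∧ decide (k = min i j) = z := by
  have := tag_min h
  by_cases h1 : decide (i = min i j) = z
  · exact ⟨i, Or.inl rfl, h1⟩
  · refine ⟨j, Or.inr rfl, ?_⟩
    generalize decide (i = min i j) = x at *
    generalize decide (j = min i j) = y at *
    cases x <;> cases y <;> cases z <;> simp_all

theorem D3_aux (hsymm : ∀ i j, M i j = M j i)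
    (hlarge : ∀ i j, i ≠ j → 3 ≤ M i j) {i j : Fin n} {a b : Fin n × Bool} (hij : i ≠ j) (hM : M i j = ⊤) (ha : a.1 = i)
    (hb : b.1 = j) (h : (DD hlarge (min i j) (max i j)).A) :
    ¬ ((DD hlarge (min i j) (max i j)).L (lt (DD hlarge (min i j) (max i j)).x (tag (min i j) a) * h)
        + 1 = (DD hlarge (min i j) (max i j)).L h ∧
      (DD hlarge (min i j) (max i j)).L (lt (DD hlarge (min i j) (max i j)).x (tag (min i j) b) * h)
        + 1 = (DD hlarge (min i j) (max i j)).L h) := by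
  apply (DD hlarge (min i j) (max i j)).D3 ((mm_minmax hsymm hij).trans hM)
  subst ha hb
  exact tag_min hij

noncomputable def theSys : Sys (Fin n) M where
  E i j α β := evd hlarge (min i j) (max i j) α = evd hlarge (min i j) (max i j) β
  len i j α := (DD hlarge (min i j) (max i j)).L (evd hlarge (min i j) (max i j) α)
  E_comm := by intro i j α β h; rw [min_comm, max_comm]; exact h
  len_comm := by intro i j α; rw [min_comm, max_comm]
  refl _ _ _ := rfl
  symm h := h.symm
  trans h h' := Eq.trans h h'
  app h h' := by simp only [evd_append]; rw [h, h']
  E_inv i j a α := by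
    simp only [evd_cons]
    rw [← mul_assoc]
    convert one_mul _
    rcases a with ⟨z, b⟩
    cases b <;> simp [lt, tag, linv]
  E_len h := by rw [h]
  len_nil i j := by simp [evd, (DD hlarge (min i j) (max i j)).L_one]
  len_zero h := by
    have := (DD hlarge _ _).L_zero _ h
    simpa [evd] using this
  step i j a α := by
    simp only [evd_cons]
    exact (DD hlarge _ _).step _ _
  desc := by
    intro i j α hij h
    obtain ⟨a, ha⟩ := (DD hlarge (min i j) (max i j)).desc (evd hlarge (min i j) (max i j) α)
      (by simpa [evd] using h)
    obtain ⟨k, hk, hk'⟩ := tag_min' hij a.1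
    refine ⟨(k, a.2), hk, ?_⟩
    rw [evd_cons]
    simp only [tag, hk']
    exact ha
  D0 := by
    intro i j a α h
    simp only [evd_cons] at h ⊢
    exact (DD hlarge _ _).D0 _ _ h
  D2a := by
    intro i j a b c s t hij ha hb hc hs
    simp only [evd_cons, evd_append, evd_replicate]
    refine (DD hlarge _ _).D2a _ _ _ _ _ hs ?_ ?_
    · simp only [tag, ha, hc]; exact (tag_min hij).symm
    · simp only [tag, ha, hb]; exact (tag_min hij).symm
  D2b := by
    intro i j a b c a' s t p hij hM ha hb hc ha' hs ht
    simp only [evd_cons, evd_append, evd_replicate]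
    refine (DD hlarge _ _).D2b ?_ _ _ _ _ _ _ _ hs ht ?_ ?_ ?_
    · rw [mm_minmax hsymm hij]; exact hM
    · simp only [tag, ha, hc]; exact (tag_min hij).symm
    · simp only [tag, ha, ha']
    · simp only [tag, ha, hb]; exact (tag_min hij).symm
  D3 := by
    intro i j a b α hij hM ha hb h1 h2
    rw [evd_cons] at h1 h2
    exact D3_aux hsymm hlarge hij hM ha hb _ ⟨h1, h2⟩
  rel := by
    intro i j k hij hM
    have := (DD hlarge (min i j) (max i j)).rel k ((mm_minmax hsymm hij).trans hM)
    have h2 := tag_min hij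
    simp only [evd_altw, tag, lt]
    simp only [if_true]
    generalize decide (i = min i j) = x at *
    generalize decide (j = min i j) = y at *
    cases x <;> cases y <;> simp_all
  sound := by
    intro H _ u hu i j α β hij hα hβ h
    have h2 := tag_min hij
    obtain ⟨f, hf⟩ := (DD hlarge (min i j) (max i j)).univ H
      (fun z => if z = decide (i = min i j) then u i else u j) (by
        intro k hk
        rw [mm_minmax hsymm hij] at hk
        have := hu i j k hij hk
        generalize decide (i = min i j) = x at *
        cases x <;> simp_all)
    have key : ∀ α, IJ i j α → f (evd hlarge (min i j) (max i j) α) = wev u α := by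
      intro α hα
      induction α with
      | nil => simp [evd, wev]
      | cons a α ih =>
        have hf' : f ((DD hlarge (min i j) (max i j)).x (decide (a.1 = min i j))) = u a.1 := by
          rw [hf]
          rcases hα a (by simp) with h | h
          · simp [h]
          · rw [h, if_neg h2.symm]
        rw [evd_cons, map_mul, ih (fun b hb => hα b (List.mem_cons_of_mem _ hb))]
        unfold wev
        rw [List.map_cons, List.prod_cons]
        congr 1
        unfold lt lt' tag
        simp only
        split_ifs
        · exact hf'
        · rw [map_inv, hf']
    rw [← key α hα, ← key β hβ, h]

end Inst
end ArtinRD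

namespace ArtinRD

variable {ι : Type} {M : ι → ι → ℕ∞} (S : Sys ι M)

theorem linv_linv (a : ι × Bool) : linv (linv a) = a := by simp [linv]
theorem linv_ne (a : ι × Bool) : linv a ≠ a := by
  intro h; have := congrArg Prod.snd h; simp [linv] at this
theorem linv_fst (a : ι × Bool) : (linv a).1 = a.1 := rfl
theorem eq_linv {a b : ι × Bool} (h : a.1 = b.1) (hne : a ≠ b) : b = linv a := by
  rcases a with ⟨x, p⟩; rcases b with ⟨y, q⟩
  simp only at h; subst h
  cases p <;> cases q <;> simp_all [linv]

theorem IJ.append {i j : ι} {α β} (h : IJ i j α) (h' : IJ i j β) : IJ i j (α ++ β) := by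
  intro a ha
  rcases List.mem_append.1 ha with h1 | h1
  · exact h a h1
  · exact h' a h1

theorem IJ.left {i j : ι} {α β} (h : IJ i j (α ++ β)) : IJ i j α :=
  fun a ha => h a (List.mem_append_left _ ha)
theorem IJ.right {i j : ι} {α β} (h : IJ i j (α ++ β)) : IJ i j β :=
  fun a ha => h a (List.mem_append_right _ ha)
theorem IJ.tail {i j : ι} {a β} (h : IJ i j (a :: β)) : IJ i j β :=
  fun b hb => h b (List.mem_cons_of_mem _ hb)
theorem IJ.cons {i j : ι} {a β} (ha : a.1 = i ∨ a.1 = j) (h : IJ i j β) : IJ i j (a :: β) := by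
  intro b hb
  rcases List.mem_cons.1 hb with rfl | h1
  · exact ha
  · exact h b h1
theorem IJ.nil {i j : ι} : IJ i j [] := by intro a ha; simp at ha
theorem IJ.rep {i j : ι} {a : ι × Bool} (ha : a.1 = i ∨ a.1 = j) (s : ℕ) :
    IJ i j (List.replicate s a) := by
  intro b hb; rw [List.eq_of_mem_replicate hb]; exact ha
theorem IJ.comm {i j : ι} {α} (h : IJ i j α) : IJ j i α := fun a ha => (h a ha).symm

/-! ### Dihedral consequences -/

def Geo (i j : ι) (α : List (ι × Bool)) : Prop := i ≠ j ∧ IJ i j α ∧ S.len i j α = α.length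

variable {S}

theorem Sys.cons {i j a α β} (h : S.E i j α β) : S.E i j (a :: α) (a :: β) :=
  S.app (S.refl i j [a]) h

theorem Sys.cancel {i j a α β} (h : S.E i j (a :: α) (a :: β)) : S.E i j α β := by
  have h1 := S.E_inv i j (linv a) α
  have h2 := S.E_inv i j (linv a) β
  rw [linv_linv] at h1 h2
  exact S.trans (S.symm h1) (S.trans (S.cons h) h2)

theorem len_append_le (i j) (α β : List (ι × Bool)) :
    S.len i j (α ++ β) ≤ α.length + S.len i j β := by
  induction α with
  | nil => simp
  | cons a α ih =>
    have := S.step i j a (α ++ β)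
    simp only [List.cons_append, List.length_cons]
    omega

theorem len_le (i j) (α : List (ι × Bool)) : S.len i j α ≤ α.length := by
  have := len_append_le (S := S) i j α []
  rw [S.len_nil] at this; simpa using this

theorem Geo.suffix {i j : ι} {α β} (h : Geo S i j (α ++ β)) : Geo S i j β := by
  refine ⟨h.1, h.2.1.right, ?_⟩
  have h1 := len_append_le (S := S) i j α β
  have h2 := h.2.2
  have h3 := len_le (S := S) i j β
  rw [List.length_append] at h2
  omega

theorem Geo.tail {i j : ι} {a β} (h : Geo S i j (a :: β)) : Geo S i j β :=
  Geo.suffix (α := [a]) h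

theorem Geo.comm {i j : ι} {α} (h : Geo S i j α) : Geo S j i α :=
  ⟨h.1.symm, h.2.1.comm, by rw [S.len_comm]; exact h.2.2⟩

theorem geo_nil {i j : ι} (h : i ≠ j) : Geo S i j [] := ⟨h, IJ.nil, by simp [S.len_nil]⟩

theorem exists_geo {i j : ι} (hij : i ≠ j) (α : List (ι × Bool)) :
    ∃ β, Geo S i j β ∧ S.E i j α β := by
  induction hn : S.len i j α using Nat.strong_induction_on generalizing α with
  | _ n ih =>
    by_cases h : S.E i j α []
    · exact ⟨[], geo_nil hij, h⟩
    · obtain ⟨a, ha, hl⟩ := S.desc hij h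
      obtain ⟨β, hβ, hE⟩ := ih (S.len i j (a :: α)) (by omega) (a :: α) rfl
      have hE' : S.E i j α (linv a :: β) := by
        have h1 := S.E_inv i j (linv a) α
        rw [linv_linv] at h1
        exact S.trans (S.symm h1) (S.cons hE)
      refine ⟨linv a :: β, ⟨hij, hβ.2.1.cons ha, ?_⟩, hE'⟩
      rw [← S.E_len hE', List.length_cons, ← hβ.2.2, ← S.E_len hE]
      omega

theorem geo_of_E {i j : ι} {α β} (h : Geo S i j α) (hE : S.E i j α β) (hβ : IJ i j β)
    (hl : α.length = β.length) : Geo S i j β :=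
  ⟨h.1, hβ, by rw [← S.E_len hE, h.2.2, hl]⟩

theorem geo_length {i j : ι} {α β} (h : Geo S i j α) (h' : Geo S i j β) (hE : S.E i j α β) :
    α.length = β.length := by
  rw [← h.2.2, ← h'.2.2, S.E_len hE]

theorem D0_lemma {i j : ι} {a b α β} (h : Geo S i j (a :: α)) (h' : Geo S i j (b :: β))
    (hE : S.E i j (a :: α) (b :: β)) (hab : a ≠ b) : a.1 ≠ b.1 := by
  intro hn
  obtain rfl := eq_linv hn hab
  have h1 : S.len i j (a :: α) = S.len i j α + 1 := by
    rw [h.2.2, h.tail.2.2]; rfl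
  have h2 := S.D0 h1
  have h3 : S.E i j (a :: a :: α) β := S.trans (S.cons hE) (S.E_inv i j a β)
  rw [S.E_len h3, h'.tail.2.2, h.tail.2.2] at h2
  have := geo_length h h' hE
  simp at this; omega

/-! ### The rewriting equivalence -/

variable (S)

inductive Eqv : List (ι × Bool) → List (ι × Bool) → Prop
  | nil : Eqv [] []
  | cons (a) {w w'} : Eqv w w' → Eqv (a :: w) (a :: w')
  | dih {i j α β} (v) : Geo S i j α → Geo S i j β → S.E i j α β → Eqv (α ++ v) (β ++ v)
  | trans {w w' w''} : Eqv w w' → Eqv w' w'' → Eqv w w''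

variable {S}

theorem Eqv.refl (w) : Eqv S w w := by
  induction w with
  | nil => exact .nil
  | cons a w ih => exact .cons a ih

theorem Eqv.symm {w w'} (h : Eqv S w w') : Eqv S w' w := by
  induction h with
  | nil => exact .nil
  | cons a _ ih => exact .cons a ih
  | dih v h1 h2 h3 => exact .dih v h2 h1 (S.symm h3)
  | trans _ _ ih1 ih2 => exact ih2.trans ih1

theorem Eqv.length {w w'} (h : Eqv S w w') : w.length = w'.length := by
  induction h with
  | nil => rfl
  | cons a _ ih => simp [ih]
  | dih v h1 h2 h3 => simp [geo_length h1 h2 h3]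
  | trans _ _ ih1 ih2 => exact ih1.trans ih2

theorem Eqv.appl (u) {w w'} (h : Eqv S w w') : Eqv S (u ++ w) (u ++ w') := by
  induction u with
  | nil => exact h
  | cons a u ih => exact .cons a ih

theorem Eqv.ofE {i j : ι} {α β v v'} (h1 : Geo S i j α) (h2 : Geo S i j β) (h3 : S.E i j α β)
    (hv : Eqv S v v') : Eqv S (α ++ v) (β ++ v') :=
  (Eqv.dih v h1 h2 h3).trans (hv.appl β)

variable (S)
def Desc (a : ι × Bool) (w : List (ι × Bool)) : Prop := ∃ v, Eqv S w (a :: v)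

def Red : List (ι × Bool) → Prop
  | [] => True
  | a :: w => Red w ∧ ¬ Desc S (linv a) w

def NoD (i j : ι) (v : List (ι × Bool)) : Prop := ∀ a : ι × Bool, a.1 = i ∨ a.1 = j → ¬ Desc S a v

def TT (w w' : List (ι × Bool)) : Prop := ∃ a v b u, w = a :: v ∧ w' = b :: u ∧
  ((a = b ∧ Eqv S v u) ∨ (a.1 ≠ b.1 ∧ ∃ α β z, Geo S a.1 b.1 (a :: α) ∧ Geo S a.1 b.1 (b :: β) ∧
    S.E a.1 b.1 (a :: α) (b :: β) ∧ Eqv S v (α ++ z) ∧ Eqv S u (β ++ z)))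

def T0 (w w' : List (ι × Bool)) : Prop := (w = [] ∧ w' = []) ∨ TT S w w'

def HN (N : ℕ) : Prop := ∀ w w', w.length ≤ N → Red S w → Eqv S w w' → Red S w' ∧ T0 S w w'

variable {S}

theorem Desc.of_eqv {a w w'} (h : Desc S a w) (he : Eqv S w w') : Desc S a w' := by
  obtain ⟨v, hv⟩ := h; exact ⟨v, he.symm.trans hv⟩

theorem Desc.cons (a : ι × Bool) (w) : Desc S a (a :: w) := ⟨w, Eqv.refl _⟩

theorem not_desc_nil (a : ι × Bool) : ¬ Desc S a [] := by
  rintro ⟨v, hv⟩; have := hv.length; simp at this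

theorem Red.suffix {u v} (h : Red S (u ++ v)) : Red S v := by
  induction u with
  | nil => exact h
  | cons a u ih => exact ih h.1

theorem NoD.of_eqv {i j : ι} {v v'} (h : NoD S i j v) (he : Eqv S v v') : NoD S i j v' :=
  fun a ha hd => h a ha (hd.of_eqv he.symm)

theorem geoPrefix {i j : ι} (hij : i ≠ j) {h v} (hr : Red S (h ++ v)) (hI : IJ i j h) :
    Geo S i j h := by
  induction h with
  | nil => exact geo_nil hij
  | cons a h ih =>
    have hg := ih hr.1 hI.tail
    rcases S.step i j a h with h1 | h1
    · exact ⟨hij, hI, by rw [h1, hg.2.2]; rfl⟩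
    · exfalso
      obtain ⟨β, hβ, hE⟩ := exists_geo (S := S) hij (a :: h)
      have hE' : S.E i j h (linv a :: β) := by
        have h1 := S.E_inv i j (linv a) h
        rw [linv_linv] at h1
        exact S.trans (S.symm h1) (S.cons hE)
      have hg' : Geo S i j (linv a :: β) := by
        apply geo_of_E hg hE' (hβ.2.1.cons (hI a (by simp)))
        rw [← hg.2.2, List.length_cons, ← hβ.2.2, ← S.E_len hE, h1]
      exact hr.2 ⟨β ++ v, Eqv.dih v hg hg' hE'⟩

theorem strip (b : ι × Bool) (u) : ∃ s u', Eqv S u (List.replicate s b ++ u') ∧ ¬ Desc S b u' := by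
  induction hn : u.length using Nat.strong_induction_on generalizing u with
  | _ n ih =>
    by_cases h : Desc S b u
    · obtain ⟨v, hv⟩ := h
      have hl := hv.length
      simp at hl
      obtain ⟨s, u', h1, h2⟩ := ih v.length (by omega) v rfl
      exact ⟨s + 1, u', hv.trans (by rw [List.replicate_succ]; exact h1.cons b), h2⟩
    · exact ⟨0, u, Eqv.refl _, h⟩

theorem strip_pos {b : ι × Bool} {u s u'} (h : Eqv S u (List.replicate s b ++ u'))
    (h' : ¬ Desc S b u') (hd : Desc S b u) : 1 ≤ s := by
  rcases Nat.eq_zero_or_pos s with rfl | hs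
  · exact absurd (hd.of_eqv h) h'
  · exact hs

theorem desc_rep {b : ι × Bool} {u s u'} (h : Eqv S u (List.replicate s b ++ u')) (hs : 1 ≤ s) :
    Desc S b u := by
  obtain ⟨s, rfl⟩ : ∃ k, s = k + 1 := ⟨s - 1, by omega⟩
  exact ⟨_, h⟩

/-! ### consequences of the induction hypothesis -/

section IH

theorem red_eqv {N : ℕ} (H : HN S N) {w w'} (hl : w.length ≤ N) (hr : Red S w) (he : Eqv S w w') : Red S w' :=
  (H w w' hl hr he).1

theorem red_cons_eqv {N : ℕ} (H : HN S N) {b u u'} (hl : u.length ≤ N) (hr : Red S (b :: u)) (he : Eqv S u u') :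
    Red S (b :: u') :=
  ⟨red_eqv H hl hr.1 he, fun hd => hr.2 (hd.of_eqv he.symm)⟩

theorem eqv_cancel {N : ℕ} (H : HN S N) {a v u} (hl : (a :: v).length ≤ N) (hr : Red S (a :: v))
    (he : Eqv S (a :: v) (a :: u)) : Eqv S v u := by
  rcases (H _ _ hl hr he).2 with h | ⟨a', v', b', u', h1, h2, h3⟩
  · simp at h
  · obtain ⟨rfl, rfl⟩ := List.cons.inj h1
    obtain ⟨rfl, rfl⟩ := List.cons.inj h2
    rcases h3 with h3 | h3
    · exact h3.2
    · exact absurd rfl h3.1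

theorem strip_uniq {N : ℕ} (H : HN S N) {b : ι × Bool} {u' u''} : ∀ {s t : ℕ},
    (List.replicate s b ++ u').length ≤ N → Red S (List.replicate s b ++ u') →
    Eqv S (List.replicate s b ++ u') (List.replicate t b ++ u'') → ¬ Desc S b u' → ¬ Desc S b u'' →
    s = t ∧ Eqv S u' u'' := by
  intro s
  induction s with
  | zero =>
    intro t hl hr he h1 h2
    rcases Nat.eq_zero_or_pos t with rfl | ht
    · exact ⟨rfl, he⟩
    · exact absurd (desc_rep he ht) h1
  | succ s ih =>
    intro t hl hr he h1 h2
    rcases Nat.eq_zero_or_pos t with rfl | ht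
    · exact absurd (desc_rep he.symm (by omega)) h2
    · obtain ⟨t, rfl⟩ : ∃ k, t = k + 1 := ⟨t - 1, by omega⟩
      simp only [List.replicate_succ, List.cons_append] at hl hr he
      have := ih (t := t) (by simp at hl ⊢; omega) hr.1 (eqv_cancel H hl hr he) h1 h2
      exact ⟨by omega, this.2⟩

theorem decomp {N : ℕ} (H : HN S N) {i j : ι} (hij : i ≠ j) {w} (hl : w.length ≤ N) (hr : Red S w) :
    ∃ h v, Eqv S w (h ++ v) ∧ Geo S i j h ∧ NoD S i j v := by
  have key : ∀ w : List (ι × Bool), ∃ h v, Eqv S w (h ++ v) ∧ IJ i j h ∧ NoD S i j v := by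
    intro w
    induction hn : w.length using Nat.strong_induction_on generalizing w with
    | _ n ih =>
      by_cases hd : NoD S i j w
      · exact ⟨[], w, Eqv.refl _, IJ.nil, hd⟩
      · unfold NoD at hd
        push Not at hd
        obtain ⟨a, ha, v, hv⟩ := hd
        have hl := hv.length
        simp at hl
        obtain ⟨h, v', h1, h2, h3⟩ := ih v.length (by omega) v rfl
        exact ⟨a :: h, v', hv.trans (h1.cons a), h2.cons ha, h3⟩
  obtain ⟨h, v, h1, h2, h3⟩ := key w
  exact ⟨h, v, h1, geoPrefix hij (red_eqv H hl hr h1) h2, h3⟩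

theorem uniq {N : ℕ} (H : HN S N) {i j : ι} (hij : i ≠ j) : ∀ {h v h' v'}, (h ++ v).length ≤ N → Red S (h ++ v) →
    Eqv S (h ++ v) (h' ++ v') → IJ i j h → IJ i j h' → NoD S i j v → NoD S i j v' →
    S.E i j h h' ∧ Eqv S v v' := by
  intro h
  induction hn : h.length using Nat.strong_induction_on generalizing h with
  | _ n ih =>
    intro v h' v' hl hr he hI hI' hv hv'
    cases h with
    | nil =>
      cases h' with
      | nil => exact ⟨S.refl _ _ _, he⟩
      | cons b h' => exact absurd ⟨_, he⟩ (hv b (hI' b (by simp)))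
    | cons a h =>
      cases h' with
      | nil => exact absurd ⟨_, he.symm⟩ (hv' a (hI a (by simp)))
      | cons b h' =>
        simp only [List.length_cons] at hn
        have hl' : (h ++ v).length ≤ N := by simp at hl ⊢; omega
        have ih' := fun {v h' v'} => ih h.length (by omega) (h := h) rfl (v := v) (h' := h') (v' := v')
        rcases H _ _ hl hr he with ⟨hr', hT⟩
        rcases hT with hT | ⟨a', x, b', y, h1, h2, h3⟩
        · simp at hT
        · obtain ⟨rfl, rfl⟩ := List.cons.inj h1
          obtain ⟨rfl, rfl⟩ := List.cons.inj h2
          rcases h3 with ⟨rfl, h3⟩ | ⟨hab, α, β, z, hα, hβ, hE, e1, e2⟩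
          · have := ih' hl' hr.1 h3 hI.tail hI'.tail hv hv'
            exact ⟨S.cons this.1, this.2⟩
          · have hG : Geo S i j (a :: α) ∧ Geo S i j (b :: β) ∧ S.E i j (a :: α) (b :: β) := by
              have h1 := hI a (by simp)
              have h2 := hI' b (by simp)
              rcases h1 with h1 | h1 <;> rcases h2 with h2 | h2
              · exact absurd (h1.trans h2.symm) hab
              · rw [h1, h2] at hα hβ hE; exact ⟨hα, hβ, hE⟩
              · rw [h1, h2] at hα hβ hE; exact ⟨hα.comm, hβ.comm, S.E_comm hE⟩
              · exact absurd (h1.trans h2.symm) hab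
            obtain ⟨hα, hβ, hE⟩ := hG
            have hlz : z.length ≤ N := by
              have := e1.length; simp at this hl'; omega
            have hrz : Red S z := (red_eqv H hl' hr.1 e1).suffix
            obtain ⟨k, z0, ez, hk, hz0⟩ := decomp H hij hlz hrz
            have e1' : Eqv S (h ++ v) ((α ++ k) ++ z0) := by
              rw [List.append_assoc]; exact e1.trans (ez.appl α)
            have e2' : Eqv S (h' ++ v') ((β ++ k) ++ z0) := by
              rw [List.append_assoc]; exact e2.trans (ez.appl β)
            have A1 := ih' hl' hr.1 e1' hI.tail (hα.tail.2.1.append hk.2.1) hv hz0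
            have hll : (a :: (h ++ v)).length = (b :: (h' ++ v')).length := he.length
            have hl2 : (h' ++ v').length ≤ N := by simp at hll hl' ⊢; omega
            have hlen : (β ++ k).length = h.length := by
              have a1 := e1'.length; have a2 := A1.2.length
              have a3 := geo_length hα hβ hE
              simp at a1 a2 a3 ⊢; omega
            have A2 := ih (β ++ k).length (by omega) (h := β ++ k) rfl (v := z0) (h' := h') (v' := v')
              (by have := e2'.length; omega) (red_eqv H hl2 hr'.1 e2') e2'.symm
              (hβ.tail.2.1.append hk.2.1) hI'.tail hz0 hv'
            refine ⟨?_, A1.2.trans A2.2⟩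
            have B1 : S.E i j (a :: h) (a :: (α ++ k)) := S.cons A1.1
            have B2 : S.E i j (a :: (α ++ k)) (b :: (β ++ k)) := S.app hE (S.refl _ _ k)
            have B3 : S.E i j (b :: (β ++ k)) (b :: h') := S.cons A2.1
            exact S.trans B1 (S.trans B2 B3)

theorem lemmaH {N : ℕ} (H : HN S N) {i j : ι} (hij : i ≠ j) {v} (hv : Red S v) (hd : NoD S i j v) : ∀ {h},
    Geo S i j h → (h ++ v).length ≤ N + 1 → Red S (h ++ v) := by
  intro h
  induction h with
  | nil => intro _ _; exact hv
  | cons a h ih =>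
    intro hg hl
    have hl' : (h ++ v).length ≤ N := by simp at hl ⊢; omega
    have hr := ih hg.tail (by omega)
    refine ⟨hr, ?_⟩
    rintro ⟨y, hy⟩
    have hry := red_eqv H hl' hr hy
    have hly : y.length ≤ N := by have := hy.length; simp at this hl'; omega
    obtain ⟨k, y0, ey, hk, hy0⟩ := decomp H hij hly hry.1
    have U := uniq H hij hl' hr (h' := linv a :: k) (v' := y0) (hy.trans (ey.cons _)) hg.tail.2.1
      (hk.2.1.cons (hg.2.1 a (by simp))) hd hy0
    have hE : S.E i j (a :: h) k := S.trans (S.cons U.1) (S.E_inv i j a k)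
    have h1 := S.E_len hE
    have h2 := len_le (S := S) i j k
    rw [hg.2.2] at h1
    have h3 := U.2.length
    have h4 := (hy.trans (ey.cons _)).length
    simp at h1 h3 h4
    omega

end IH
end ArtinRD

namespace ArtinRD

variable {ι : Type} {M : ι → ι → ℕ∞} {S : Sys ι M}

variable (S) in
/-- the conclusion of the key lemma on alternating descents -/
def Concl (i j : ι) (u' : List (ι × Bool)) : Prop :=
  ∃ (d : ι × Bool) (t : ℕ) (g2 : List (ι × Bool)) (e : ι × Bool) (p : ℕ) (g3 : List (ι × Bool)),
    d.1 = i ∧ 1 ≤ t ∧ Eqv S u' (List.replicate t d ++ g2) ∧ ¬ Desc S d g2 ∧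
    e.1 = j ∧ 1 ≤ p ∧ Eqv S g2 (List.replicate p e ++ g3) ∧ ¬ Desc S e g3 ∧
    (4 ≤ M j i → ∃ f : ι × Bool, f.1 = i ∧ Desc S f g3)

theorem red_rep {b : ι × Bool} {t X} (hr : Red S (List.replicate t b ++ X)) (ht : 1 ≤ t) :
    ¬ Desc S (linv b) X := by
  obtain ⟨t, rfl⟩ : ∃ k, t = k + 1 := ⟨t - 1, by omega⟩
  rw [List.replicate_succ', List.append_assoc] at hr
  exact hr.suffix.2

theorem next_letter {i j : ι} {b : ι × Bool} {t h v} (hr : Red S (List.replicate t b ++ (h ++ v)))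
    (ht : 1 ≤ t) (hd : ¬ Desc S b (h ++ v)) (hI : IJ i j h) (hne : h ≠ []) (hb : b.1 = j) :
    ∃ d : ι × Bool, d.1 = i ∧ Desc S d (h ++ v) := by
  cases h with
  | nil => exact absurd rfl hne
  | cons d h =>
    refine ⟨d, ?_, Desc.cons _ _⟩
    rcases hI d (by simp) with h1 | h1
    · exact h1
    · exfalso
      by_cases hdb : b = d
      · subst hdb; exact hd (Desc.cons _ _)
      · have := eq_linv (hb.trans h1.symm) hdb
        apply red_rep hr ht
        rw [← this]; exact Desc.cons _ _

section IH

theorem LKu {N : ℕ} (H : HN S N) {a b : ι × Bool} {u α β z s u'} (hl : u.length ≤ N) (hr : Red S (b :: u))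
    (hab : a.1 ≠ b.1) (hα : Geo S a.1 b.1 (a :: α)) (hβ : Geo S a.1 b.1 (b :: β))
    (hE : S.E a.1 b.1 (a :: α) (b :: β)) (e1 : Eqv S u (β ++ z))
    (e2 : Eqv S u (List.replicate s b ++ u')) (hnd : ¬ Desc S b u') : Concl S a.1 b.1 u' := by
  have hru := hr.1
  have hrz : Red S z := (red_eqv H hl hru e1).suffix
  have hlz : z.length ≤ N := by have := e1.length; simp at this; omega
  have hru' : Red S u' := (red_eqv H hl hru e2).suffix
  have hlu' : u'.length ≤ N := by have := e2.length; simp at this; omega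
  obtain ⟨k, z0, ez, hk, hz0⟩ := decomp H hab hlz hrz
  obtain ⟨h1, v1, eu', hh1, hv1⟩ := decomp H hab hlu' hru'
  have E1 : Eqv S u ((β ++ k) ++ z0) := by
    rw [List.append_assoc]; exact e1.trans (ez.appl β)
  have E2 : Eqv S u ((List.replicate s b ++ h1) ++ v1) := by
    rw [List.append_assoc]; exact e2.trans (eu'.appl _)
  have hRb : Red S (List.replicate (s + 1) b ++ (h1 ++ v1)) := by
    have := red_cons_eqv H hl hr E2
    rw [List.append_assoc] at this
    exact this
  have hG : Geo S a.1 b.1 (b :: (β ++ k)) := by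
    refine geoPrefix hab (v := z0) (red_cons_eqv H hl hr E1) ?_
    exact hβ.2.1.append hk.2.1
  have hbI : ∀ s, IJ a.1 b.1 (List.replicate s b) := fun s => IJ.rep (Or.inr rfl) s
  have U := uniq H hab (by rw [← E1.length]; exact hl) (red_eqv H hl hru E1) (E1.symm.trans E2)
    (hβ.tail.2.1.append hk.2.1) ((hbI s).append hh1.2.1) hz0 hv1
  have EB : S.E a.1 b.1 (b :: (β ++ k)) (List.replicate (s + 1) b ++ h1) := S.cons U.1
  have hX : ∀ X, S.E a.1 b.1 h1 X → S.len a.1 b.1 (linv a :: (List.replicate (s + 1) b ++ X))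
      < S.len a.1 b.1 (List.replicate (s + 1) b ++ X) := by
    intro X hX
    have F1 : S.E a.1 b.1 (List.replicate (s + 1) b ++ X) (b :: (β ++ k)) :=
      S.trans (S.app (S.refl _ _ _) (S.symm hX)) (S.symm EB)
    have F2 : S.E a.1 b.1 (b :: (β ++ k)) (a :: (α ++ k)) :=
      S.app (S.symm hE) (S.refl _ _ k)
    have F3 : S.E a.1 b.1 (linv a :: (List.replicate (s + 1) b ++ X)) (α ++ k) := by
      have := S.E_inv a.1 b.1 (linv a) (α ++ k)
      rw [linv_linv] at this
      exact S.trans (S.cons (S.trans F1 F2)) this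
    rw [S.E_len F3, S.E_len F1, hG.2.2]
    have l1 := len_le (S := S) a.1 b.1 (α ++ k)
    have l2 := geo_length hα hβ hE
    simp at l1 l2 ⊢; omega
  have ne1 : h1 ≠ [] := by
    rintro rfl
    have A1 := hX [] (S.refl _ _ _)
    have A2 := S.D2a (a := b) (b := linv a) (c := a) (s := s + 1) 0 hab.symm rfl rfl rfl (by omega)
    rw [S.len_comm, S.len_comm (i := b.1)] at A2
    simp only [List.replicate_zero] at A2
    omega
  have hnd1 : ¬ Desc S b (h1 ++ v1) := fun hd => hnd (hd.of_eqv eu'.symm)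
  obtain ⟨d, hd, hdd⟩ := next_letter hRb (by omega) hnd1 hh1.2.1 ne1 rfl
  obtain ⟨t, g2, eg2, hg2⟩ := strip (S := S) d u'
  have ht : 1 ≤ t := strip_pos eg2 hg2 (hdd.of_eqv eu'.symm)
  have hrt := red_eqv H hlu' hru' eg2
  have hrg2 : Red S g2 := hrt.suffix
  have hlg2 : g2.length ≤ N := by have := eg2.length; simp at this; omega
  obtain ⟨h2, v2, eh2, hh2, hv2⟩ := decomp H hab hlg2 hrg2
  have E3 : Eqv S u' ((List.replicate t d ++ h2) ++ v2) := by
    rw [List.append_assoc]; exact eg2.trans (eh2.appl _)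
  have hdI : ∀ s, IJ a.1 b.1 (List.replicate s d) := fun s => IJ.rep (Or.inl hd) s
  have U2 := uniq H hab (by rw [← eu'.length]; exact hlu') (red_eqv H hlu' hru' eu')
    (eu'.symm.trans E3) hh1.2.1 ((hdI t).append hh2.2.1) hv1 hv2
  have ne2 : h2 ≠ [] := by
    rintro rfl
    have A1 := hX _ (by simpa using U2.1)
    have A2 := S.D2a (a := b) (b := linv a) (c := d) (s := s + 1) t hab.symm rfl rfl hd (by omega)
    rw [S.len_comm, S.len_comm (i := b.1)] at A2
    omega
  have hR2 : Red S (List.replicate t d ++ (h2 ++ v2)) := by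
    have := red_eqv H hlu' hru' E3
    rwa [List.append_assoc] at this
  obtain ⟨e, he, hed⟩ := next_letter hR2 ht (fun h => hg2 (h.of_eqv eh2.symm)) hh2.2.1.comm ne2 hd
  obtain ⟨p, g3, eg3, hg3⟩ := strip (S := S) e g2
  have hp : 1 ≤ p := strip_pos eg3 hg3 (hed.of_eqv eh2.symm)
  refine ⟨d, t, g2, e, p, g3, hd, ht, eg2, hg2, he, hp, eg3, hg3, fun hM => ?_⟩
  have hrg3 : Red S g3 := (red_eqv H hlg2 hrg2 eg3).suffix
  have hlg3 : g3.length ≤ N := by have := eg3.length; simp at this; omega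
  obtain ⟨h3, v3, eh3, hh3, hv3⟩ := decomp H hab hlg3 hrg3
  have E4 : Eqv S g2 ((List.replicate p e ++ h3) ++ v3) := by
    rw [List.append_assoc]; exact eg3.trans (eh3.appl _)
  have heI : ∀ s, IJ a.1 b.1 (List.replicate s e) := fun s => IJ.rep (Or.inr he) s
  have U3 := uniq H hab (by rw [← eh2.length]; exact hlg2) (red_eqv H hlg2 hrg2 eh2)
    (eh2.symm.trans E4) hh2.2.1 ((heI p).append hh3.2.1) hv2 hv3
  have ne3 : h3 ≠ [] := by
    rintro rfl
    have A0 : S.E a.1 b.1 h1 (List.replicate t d ++ List.replicate p e) :=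
      S.trans U2.1 (S.app (S.refl _ _ _) (by simpa using U3.1))
    have A1 := hX _ A0
    have A2 := S.D2b (a := b) (b := linv a) (c := d) (a' := e) (s := s + 1) (t := t) p hab.symm hM
      rfl rfl hd he (by omega) ht
    rw [S.len_comm, S.len_comm (i := b.1)] at A2
    omega
  have hR3 : Red S (List.replicate p e ++ (h3 ++ v3)) := by
    have := red_eqv H hlg2 hrg2 E4
    rwa [List.append_assoc] at this
  obtain ⟨f, hf, hfd⟩ := next_letter hR3 hp (fun h => hg3 (h.of_eqv eh3.symm)) hh3.2.1 ne3 he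
  exact ⟨f, hf, hfd.of_eqv eh3.symm⟩

/-- two descents with distinct names give the key conclusion -/
theorem LKg {N : ℕ} (H : HN S N) {a b : ι × Bool} {g s g'} (hl : g.length ≤ N) (hr : Red S g) (hab : a.1 ≠ b.1)
    (ha : Desc S a g) (hb : 1 ≤ s) (e : Eqv S g (List.replicate s b ++ g'))
    (hnd : ¬ Desc S b g') : Concl S a.1 b.1 g' := by
  obtain ⟨s, rfl⟩ : ∃ k, s = k + 1 := ⟨s - 1, by omega⟩
  obtain ⟨v, hv⟩ := ha
  have e' : Eqv S (a :: v) (b :: (List.replicate s b ++ g')) := hv.symm.trans e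
  have hrv := red_eqv H hl hr hv
  obtain ⟨hrb, hT⟩ := H _ _ (by rw [← hv.length]; exact hl) hrv e'
  rcases hT with hT | ⟨a', x, b', y, h1, h2, h3⟩
  · simp at hT
  · obtain ⟨rfl, rfl⟩ := List.cons.inj h1
    obtain ⟨rfl, rfl⟩ := List.cons.inj h2
    rcases h3 with ⟨rfl, h3⟩ | ⟨_, α, β, z, hα, hβ, hE, e1, e2⟩
    · exact absurd rfl hab
    · refine LKu H ?_ hrb hab hα hβ hE e2 (Eqv.refl _) hnd
      have := e.length
      simp at this ⊢; omega

theorem lemmaS {N : ℕ} (H : HN S N) {i j k : ι} (hij : i ≠ j) (hik : i ≠ k) (hjk : j ≠ k) {g} : ∀ {b c a : ι × Bool} {s g'},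
    g.length ≤ N → Red S g → b.1 = j → c.1 = k → a.1 = i → 1 ≤ s → Desc S c g →
    Eqv S g (List.replicate s b ++ g') → ¬ Desc S b g' → Desc S a g' → False := by
  induction hn : g.length using Nat.strong_induction_on generalizing g i j k with
  | _ n ih =>
    intro b c a s g' hl hr hb hc ha hs hdc e hnd hda
    replace hl : g.length ≤ N := by rw [hn]; exact hl
    subst hb hc ha
    obtain ⟨d, t, g2, e', p, g3, hd, ht, eg2, hg2, he', hp, eg3, hg3, -⟩ :=
      LKg H hl hr hjk.symm hdc hs e hnd
    have hlen := e.length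
    simp at hlen
    exact ih g'.length (by omega) (i := b.1) (j := c.1) (k := a.1) hjk hij.symm hik.symm (g := g') rfl
      (by omega) (red_eqv H hl hr e).suffix hd rfl he' ht hda eg2 hg2 (desc_rep eg3 hp)

theorem TT_trans {N : ℕ} (H : HN S N) {w w' w''} (hl : w'.length ≤ N + 1) (hr : Red S w) (hr' : Red S w')
    (hr'' : Red S w'') (h1 : TT S w w') (h2 : TT S w' w'') : TT S w w'' := by
  obtain ⟨a, v, b, u, rfl, rfl, h3⟩ := h1
  obtain ⟨b', u', c, x, h4, rfl, h5⟩ := h2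
  obtain ⟨rfl, rfl⟩ := List.cons.inj h4
  have hlu : u.length ≤ N := by simpa using hl
  refine ⟨a, v, c, x, rfl, rfl, ?_⟩
  rcases h3 with ⟨rfl, h3⟩ | ⟨hab, α, β, z, hα, hβ, hE, e1, e2⟩
  · rcases h5 with ⟨rfl, h5⟩ | ⟨hbc, α', β', z', hα', hβ', hE', e1', e2'⟩
    · exact Or.inl ⟨rfl, h3.trans h5⟩
    · exact Or.inr ⟨hbc, α', β', z', hα', hβ', hE', h3.trans e1', e2'⟩
  rcases h5 with ⟨rfl, h5⟩ | ⟨hbc, β', γ, z', hβ', hγ, hE', e1', e2'⟩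
  · exact Or.inr ⟨hab, α, β, z, hα, hβ, hE, e1, h5.symm.trans e2⟩
  have hrz : Red S z := (red_eqv H hlu hr'.1 e2).suffix
  have hlz : z.length ≤ N := by have := e2.length; simp at this; omega
  by_cases hac : a.1 = c.1
  · rw [← hac] at hβ' hγ hE' hbc
    replace hβ' := hβ'.comm
    replace hγ := hγ.comm
    replace hE' := S.E_comm hE'
    have hrz' : Red S z' := (red_eqv H hlu hr'.1 e1').suffix
    have hlz' : z'.length ≤ N := by have := e1'.length; simp at this; omega
    obtain ⟨k, z0, ez, hk, hz0⟩ := decomp H hab hlz hrz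
    obtain ⟨k', z0', ez', hk', hz0'⟩ := decomp H hab hlz' hrz'
    have E1 : Eqv S u ((β ++ k) ++ z0) := by
      rw [List.append_assoc]; exact e2.trans (ez.appl _)
    have E2 : Eqv S u ((β' ++ k') ++ z0') := by
      rw [List.append_assoc]; exact e1'.trans (ez'.appl _)
    have E3 : Eqv S v ((α ++ k) ++ z0) := by
      rw [List.append_assoc]; exact e1.trans (ez.appl _)
    have E4 : Eqv S x ((γ ++ k') ++ z0') := by
      rw [List.append_assoc]; exact e2'.trans (ez'.appl _)
    have U := uniq H hab (by rw [← E1.length]; exact hlu) (red_eqv H hlu hr'.1 E1) (E1.symm.trans E2)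
      (hβ.tail.2.1.append hk.2.1) (hβ'.tail.2.1.append hk'.2.1) hz0 hz0'
    have l1 := geo_length hα hβ hE
    have l2 := geo_length hβ' hγ hE'
    have hlv : v.length ≤ N := by
      have a1 := e1.length; have a2 := e2.length
      simp at a1 a2 l1; omega
    have hlx : x.length ≤ N := by
      have a1 := e1'.length; have a2 := e2'.length
      simp at a1 a2 l2; omega
    have hG1 : Geo S a.1 b.1 (a :: (α ++ k)) :=
      geoPrefix hab (v := z0) (red_cons_eqv H hlv hr E3) (hα.2.1.append hk.2.1)
    have hG2 : Geo S a.1 b.1 (c :: (γ ++ k')) :=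
      geoPrefix hab (v := z0') (red_cons_eqv H hlx hr'' E4) (hγ.2.1.append hk'.2.1)
    have F1 : S.E a.1 b.1 (a :: (α ++ k)) (b :: (β ++ k)) := S.app hE (S.refl _ _ k)
    have F2 : S.E a.1 b.1 (b :: (β ++ k)) (b :: (β' ++ k')) := S.cons U.1
    have F3 : S.E a.1 b.1 (b :: (β' ++ k')) (c :: (γ ++ k')) := S.app hE' (S.refl _ _ k')
    have F := S.trans F1 (S.trans F2 F3)
    by_cases hac' : a = c
    · subst hac'
      exact Or.inl ⟨rfl, E3.trans ((Eqv.ofE hG1.tail hG2.tail (S.cancel F) U.2).trans E4.symm)⟩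
    · exact absurd hac (D0_lemma hG1 hG2 F hac')
  · exfalso
    obtain ⟨s, u', eu', hu'⟩ := strip (S := S) b u
    have C1 := LKu H hlu hr' hab hα hβ hE e2 eu' hu'
    have C2 := LKu H hlu hr' hbc.symm hγ.comm hβ'.comm (S.symm (S.E_comm hE')) e1' eu' hu'
    obtain ⟨d, t, g2, e, p, g3, hd, ht, eg2, hg2, he, hp, eg3, hg3, -⟩ := C1
    obtain ⟨d', t', g2', -, -, -, hd', ht', eg2', -⟩ := C2
    have hlu' : u'.length ≤ N := by have := eu'.length; simp at this; omega
    exact lemmaS H (i := b.1) (j := a.1) (k := c.1) hab.symm hbc hac hlu' (red_eqv H hlu hr'.1 eu').suffix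
      hd hd' he ht (desc_rep eg2' ht') eg2 hg2 (desc_rep eg3 hp)

theorem HN_step {N : ℕ} (H : HN S N) : HN S (N + 1) := by
  intro w w' hl hr he
  induction he with
  | nil => exact ⟨hr, Or.inl ⟨rfl, rfl⟩⟩
  | cons a h _ =>
    have hl' := hl
    simp only [List.length_cons] at hl'
    exact ⟨red_cons_eqv H (by omega) hr h, Or.inr ⟨a, _, a, _, rfl, rfl, Or.inl ⟨rfl, h⟩⟩⟩
  | trans h1 h2 ih1 ih2 =>
    have r1 := ih1 hl hr
    have hl2 := h1.length.symm.le.trans hl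
    have r2 := ih2 hl2 r1.1
    refine ⟨r2.1, ?_⟩
    rcases r1.2 with ⟨a1, a2⟩ | a
    · subst a2; subst a1
      rcases r2.2 with ⟨b1, b2⟩ | ⟨a, v, b, u, b1, _⟩
      · exact Or.inl ⟨rfl, b2⟩
      · simp at b1
    · rcases r2.2 with ⟨b1, b2⟩ | b
      · subst b1
        obtain ⟨a, v, b, u, -, a2, -⟩ := a
        simp at a2
      · exact Or.inr (TT_trans H hl2 hr r1.1 r2.1 a b)
  | @dih i j α β v h1 h2 h3 =>
    have hll := geo_length h1 h2 h3
    cases α with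
    | nil =>
      cases β with
      | nil =>
        refine ⟨hr, ?_⟩
        cases v with
        | nil => exact Or.inl ⟨rfl, rfl⟩
        | cons a v => exact Or.inr ⟨a, v, a, v, rfl, rfl, Or.inl ⟨rfl, Eqv.refl _⟩⟩
      | cons b β => simp at hll
    | cons a α =>
      cases β with
      | nil => simp at hll
      | cons b β =>
        have hij := h1.1
        have hrv := hr.suffix
        have hl' : α.length + v.length ≤ N := by simp at hl; omega
        have hll' : α.length = β.length := by simpa using hll
        obtain ⟨k, v0, ev, hk, hv0⟩ := decomp H hij (by omega) hrv
        have R1 : Red S (a :: ((α ++ k) ++ v0)) := by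
          rw [List.append_assoc]
          exact red_cons_eqv H (by simpa using hl') hr (ev.appl α)
        have G1 : Geo S i j (a :: (α ++ k)) := geoPrefix hij (v := v0) R1 (h1.2.1.append hk.2.1)
        have F : S.E i j (a :: (α ++ k)) (b :: (β ++ k)) := S.app h3 (S.refl _ _ k)
        have G2 : Geo S i j (b :: (β ++ k)) :=
          geo_of_E G1 F (h2.2.1.append hk.2.1) (by simp; omega)
        have lv := ev.length
        simp at lv
        have R2 : Red S ((b :: (β ++ k)) ++ v0) :=
          lemmaH H hij ((red_eqv H (by omega) hrv ev).suffix) hv0 G2 (by simp; omega)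
        have R3 : Red S (b :: (β ++ v)) := by
          refine red_cons_eqv H (u := (β ++ k) ++ v0) (by simp; omega) R2 ?_
          rw [List.append_assoc]; exact ev.symm.appl β
        refine ⟨R3, Or.inr ⟨a, α ++ v, b, β ++ v, rfl, rfl, ?_⟩⟩
        by_cases hab : a = b
        · subst hab
          exact Or.inl ⟨rfl, Eqv.dih v h1.tail h2.tail (S.cancel h3)⟩
        · have hne := D0_lemma h1 h2 h3 hab
          refine Or.inr ⟨hne, α, β, v, ?_⟩
          rcases h1.2.1 a (by simp) with x1 | x1 <;> rcases h2.2.1 b (by simp) with x2 | x2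
          · exact absurd (x1.trans x2.symm) hne
          · rw [x1, x2]; exact ⟨h1, h2, h3, Eqv.refl _, Eqv.refl _⟩
          · rw [x1, x2]; exact ⟨h1.comm, h2.comm, S.E_comm h3, Eqv.refl _, Eqv.refl _⟩
          · exact absurd (x1.trans x2.symm) hne

end IH

theorem HN_all (N : ℕ) : HN S N := by
  induction N with
  | zero =>
    intro w w' hl hr he
    have h1 : w = [] := List.length_eq_zero_iff.1 (by omega)
    have h2 : w' = [] := List.length_eq_zero_iff.1 (by rw [← he.length]; omega)
    subst h1; subst h2
    exact ⟨hr, Or.inl ⟨rfl, rfl⟩⟩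
  | succ N ih => exact HN_step ih

end ArtinRD

namespace ArtinRD

section Quot
variable {ι : Type} {M : ι → ι → ℕ∞} {S : Sys ι M}

/-! unconditional versions -/

theorem Red.eqv {w w'} (hr : Red S w) (he : Eqv S w w') : Red S w' :=
  red_eqv (HN_all w.length) le_rfl hr he

theorem Eqv.cancel {a v u} (hr : Red S (a :: v)) (he : Eqv S (a :: v) (a :: u)) : Eqv S v u :=
  eqv_cancel (HN_all _) le_rfl hr he

variable (S)

def redSetoid : Setoid {w // Red S w} where
  r w w' := Eqv S w.1 w'.1
  iseqv := ⟨fun _ => Eqv.refl _, fun h => h.symm, fun h h' => h.trans h'⟩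

def QX := Quotient (redSetoid S)

variable {S}

def qmk (w) (hr : Red S w) : QX S := Quotient.mk (redSetoid S) ⟨w, hr⟩

theorem qmk_eq {w w'} {hr : Red S w} {hr' : Red S w'} : qmk w hr = qmk w' hr' ↔ Eqv S w w' :=
  ⟨fun h => Quotient.exact (s := redSetoid S) h, fun h => Quotient.sound (s := redSetoid S) h⟩

open Classical in
noncomputable def actR (a : ι × Bool) (w : {w // Red S w}) : {w // Red S w} :=
  if h : Desc S (linv a) w.1 then ⟨h.choose, (w.2.eqv h.choose_spec).1⟩
  else ⟨a :: w.1, w.2, h⟩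

theorem actR_up {a : ι × Bool} {w : {w // Red S w}} (h : ¬ Desc S (linv a) w.1) :
    (actR a w).1 = a :: w.1 := by
  unfold actR; rw [dif_neg h]

theorem actR_down {a : ι × Bool} {w : {w // Red S w}} {v} (h : Eqv S w.1 (linv a :: v)) :
    Eqv S (actR a w).1 v := by
  have hd : Desc S (linv a) w.1 := ⟨v, h⟩
  unfold actR; rw [dif_pos hd]
  have h1 := hd.choose_spec
  exact Eqv.cancel (w.2.eqv h1) (h1.symm.trans h)

theorem actR_congr {a : ι × Bool} {w w' : {w // Red S w}} (h : Eqv S w.1 w'.1) :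
    Eqv S (actR a w).1 (actR a w').1 := by
  by_cases hd : Desc S (linv a) w.1
  · obtain ⟨v, hv⟩ := hd
    exact (actR_down hv).trans (actR_down (h.symm.trans hv)).symm
  · rw [actR_up hd, actR_up (fun h' => hd (h'.of_eqv h.symm))]
    exact h.cons a

theorem actR_inv {a : ι × Bool} {w : {w // Red S w}} : Eqv S (actR (linv a) (actR a w)).1 w.1 := by
  by_cases hd : Desc S (linv a) w.1
  · obtain ⟨v, hv⟩ := hd
    have h1 := actR_down hv
    have h2 := w.2.eqv hv
    rw [actR_up]
    · exact (h1.cons _).trans hv.symm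
    · intro h; exact h2.2 (h.of_eqv h1)
  · apply actR_down
    rw [linv_linv, actR_up hd]
    exact Eqv.refl _

noncomputable def actQ (a : ι × Bool) : QX S → QX S :=
  Quotient.map' (s₁ := redSetoid S) (s₂ := redSetoid S) (actR a) (fun _ _ h => actR_congr h)

theorem actQ_inv (a : ι × Bool) (x : QX S) : actQ (linv a) (actQ a x) = x := by
  induction x using Quotient.inductionOn with
  | h w => exact Quotient.sound (s := redSetoid S) actR_inv

theorem actQ_up {a : ι × Bool} {w} (hr : Red S (a :: w)) : actQ a (qmk w hr.1) = qmk (a :: w) hr := by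
  refine Quotient.sound (s := redSetoid S) ?_
  show Eqv S _ _
  rw [actR_up hr.2]
  exact Eqv.refl _

theorem actQ_down {a : ι × Bool} {w v} (hr : Red S w) (hv : Red S v) (h : Eqv S w (linv a :: v)) :
    actQ a (qmk w hr) = qmk v hv :=
  Quotient.sound (s := redSetoid S) (actR_down (w := ⟨w, hr⟩) h)

variable (S) in
noncomputable def PQ (i : ι) : Equiv.Perm (QX S) where
  toFun := actQ (i, true)
  invFun := actQ (i, false)
  left_inv x := actQ_inv (i, true) x
  right_inv x := actQ_inv (i, false) x

theorem red_geo_app {i j : ι} {v} (hv : Red S v) (hd : NoD S i j v) {h} (hg : Geo S i j h) :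
    Red S (h ++ v) :=
  lemmaH (HN_all (h ++ v).length) hg.1 hv hd hg (by omega)

theorem actQ_geo {i j : ι} {v} (hv : Red S v) (hd : NoD S i j v) {a h β}
    (hg : Geo S i j h) (ha : a.1 = i ∨ a.1 = j) (hβ : Geo S i j β) (hE : S.E i j (a :: h) β) :
    actQ a (qmk (h ++ v) (red_geo_app hv hd hg)) = qmk (β ++ v) (red_geo_app hv hd hβ) := by
  rcases S.step i j a h with h1 | h1
  · have hg' : Geo S i j (a :: h) := ⟨hg.1, hg.2.1.cons ha, by rw [h1, hg.2.2]; rfl⟩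
    have hr : Red S (a :: (h ++ v)) := red_geo_app hv hd hg'
    rw [actQ_up hr, qmk_eq]
    exact Eqv.dih v hg' hβ hE
  · apply actQ_down
    have hE' : S.E i j h (linv a :: β) := by
      have h1 := S.E_inv i j (linv a) h
      rw [linv_linv] at h1
      exact S.trans (S.symm h1) (S.cons hE)
    refine Eqv.dih v hg (geo_of_E hg hE' (hβ.2.1.cons ha) ?_) hE'
    rw [← hg.2.2, List.length_cons, ← hβ.2.2, ← S.E_len hE, h1]

noncomputable def actW (α : List (ι × Bool)) (x : QX S) : QX S := α.foldr actQ x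

theorem actW_geo {i j : ι} {v} (hv : Red S v) (hd : NoD S i j v) {h} (hg : Geo S i j h) : ∀ {α β},
    IJ i j α → ∀ hβ : Geo S i j β, S.E i j (α ++ h) β →
    actW α (qmk (h ++ v) (red_geo_app hv hd hg)) = qmk (β ++ v) (red_geo_app hv hd hβ) := by
  intro α
  induction α with
  | nil =>
    intro β _ hβ hE
    exact qmk_eq.2 (Eqv.dih v hg hβ hE)
  | cons a α ih =>
    intro β hα hβ hE
    obtain ⟨γ, hγ, hE'⟩ := exists_geo (S := S) hg.1 (α ++ h)
    have := ih hα.tail hγ hE'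
    show actQ a (actW α _) = _
    rw [this]
    exact actQ_geo hv hd hγ (hα a (by simp)) hβ (S.trans (S.symm (S.cons hE')) hE)

theorem actW_E {i j : ι} (hij : i ≠ j) {α β} (hα : IJ i j α) (hβ : IJ i j β) (hE : S.E i j α β)
    (x : QX S) : actW α x = actW β x := by
  induction x using Quotient.inductionOn with
  | h w =>
    obtain ⟨h, v, e, hg, hd⟩ := decomp (HN_all _) hij le_rfl w.2
    have hr := w.2.eqv e
    have hx : (Quotient.mk (redSetoid S) w : QX S) = qmk (h ++ v) hr :=
      Quotient.sound (s := redSetoid S) e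
    obtain ⟨γ, hγ, hE'⟩ := exists_geo (S := S) hij (α ++ h)
    have h1 := actW_geo hr.suffix hd hg hα hγ hE'
    have h2 := actW_geo hr.suffix hd hg hβ hγ (S.trans (S.app (S.symm hE) (S.refl _ _ _)) hE')
    show actW α (Quotient.mk (redSetoid S) w : QX S) = actW β (Quotient.mk (redSetoid S) w : QX S)
    rw [hx, h1, h2]

theorem actW_alt (x : QX S) : ∀ k i j,
    actW (altw k (i, true) (j, true)) x = altProd k (PQ S i) (PQ S j) x := by
  intro k
  induction k with
  | zero => intro i j; rfl
  | succ k ih =>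
    intro i j
    show actQ (i, true) (actW (altw k (j, true) (i, true)) x) = _
    rw [ih]; rfl

theorem IJ_altw {i j : ι} : ∀ k, IJ i j (altw k (i, true) (j, true)) ∧
    IJ i j (altw k (j, true) (i, true)) := by
  intro k
  induction k with
  | zero => exact ⟨IJ.nil, IJ.nil⟩
  | succ k ih => exact ⟨IJ.cons (Or.inl rfl) ih.2, IJ.cons (Or.inr rfl) ih.1⟩

theorem PQ_rel {i j : ι} {k : ℕ} (hij : i ≠ j) (hM : M i j = k) :
    altProd k (PQ S i) (PQ S j) = altProd k (PQ S j) (PQ S i) := by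
  ext x
  rw [← actW_alt, ← actW_alt]
  exact actW_E hij (IJ_altw k).1 (IJ_altw k).2 (S.rel hij hM) x

end Quot

section Artin
variable {n : ℕ} {M : Fin n → Fin n → ℕ∞} (S : Sys (Fin n) M)

theorem lift_artin {H : Type*} [Group H] (u : Fin n → H)
    (h : ∀ i j (k : ℕ), i ≠ j → M i j = k → altProd k (u i) (u j) = altProd k (u j) (u i)) :
    ∀ r ∈ artinRels n M, FreeGroup.lift u r = 1 := by
  rintro r ⟨i, j, hij, k, hk, rfl⟩
  simp [DihFin.map_altProd, h i j k hij hk]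

noncomputable def rho : ArtinGroup n M →* Equiv.Perm (QX S) :=
  PresentedGroup.toGroup (lift_artin (PQ S) (fun _ _ _ hij hM => PQ_rel hij hM))

theorem gen_rel (i j : Fin n) (k : ℕ) (hij : i ≠ j) (hM : M i j = k) :
    altProd k (gen n M i) (gen n M j) = altProd k (gen n M j) (gen n M i) := by
  have := PresentedGroup.one_of_mem (rels := artinRels n M) ⟨i, j, hij, k, hM, rfl⟩
  rw [map_mul, map_inv, DihFin.map_altProd, DihFin.map_altProd, mul_inv_eq_one] at this
  exact this

theorem rho_toGen (a : Letter n) (x : QX S) : rho S (toGen n M a) x = actQ a x := by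
  have h1 : ∀ i, rho S (gen n M i) = PQ S i := fun i => PresentedGroup.toGroup.of _
  rcases a with ⟨i, b⟩
  cases b
  · have : toGen n M (i, false) = (gen n M i)⁻¹ := rfl
    rw [this, map_inv, h1]; rfl
  · have : toGen n M (i, true) = gen n M i := rfl
    rw [this, h1]; rfl

theorem wordElt_cons (a : Letter n) (w) : wordElt n M (a :: w) = toGen n M a * wordElt n M w := by
  simp [wordElt]

theorem wordElt_append (w w' : List (Letter n)) :
    wordElt n M (w ++ w') = wordElt n M w * wordElt n M w' := by
  simp [wordElt]

theorem toGen_linv (a : Letter n) : toGen n M (linv a) = (toGen n M a)⁻¹ := by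
  rcases a with ⟨i, b⟩
  cases b <;> simp [toGen, linv]

variable {S}

theorem rho_red {w} (hr : Red S w) : rho S (wordElt n M w) (qmk [] trivial) = qmk w hr := by
  induction w with
  | nil => simp [wordElt]
  | cons a w ih =>
    rw [wordElt_cons, map_mul, Equiv.Perm.mul_apply, ih hr.1, rho_toGen, actQ_up hr]

theorem red_elt_eqv {w w'} (hr : Red S w) (hr' : Red S w') (h : wordElt n M w = wordElt n M w') :
    Eqv S w w' := by
  rw [← qmk_eq (hr := hr) (hr' := hr'), ← rho_red, ← rho_red, h]

theorem elt_E {i j : Fin n} {α β} (hij : i ≠ j) (hα : IJ i j α) (hβ : IJ i j β)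
    (hE : S.E i j α β) : wordElt n M α = wordElt n M β :=
  S.sound (ArtinGroup n M) (gen n M) gen_rel hij hα hβ hE

theorem eqv_elt {w w'} (h : Eqv S w w') : wordElt n M w = wordElt n M w' := by
  induction h with
  | nil => rfl
  | cons a _ ih => rw [wordElt_cons, wordElt_cons, ih]
  | dih v h1 h2 h3 => rw [wordElt_append, wordElt_append, elt_E h1.1 h1.2.1 h2.2.1 h3]
  | trans _ _ ih1 ih2 => exact ih1.trans ih2

variable (S) in
theorem exists_red (w : List (Letter n)) : ∃ w', Red S w' ∧ wordElt n M w = wordElt n M w' ∧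
    w'.length ≤ w.length ∧ (w'.length = w.length → Red S w) := by
  induction w with
  | nil => exact ⟨[], trivial, rfl, le_rfl, fun _ => trivial⟩
  | cons a w ih =>
    obtain ⟨w', hr, he, hl, hl'⟩ := ih
    by_cases hd : Desc S (linv a) w'
    · obtain ⟨v, hv⟩ := hd
      have := hv.length
      simp at this
      refine ⟨v, (hr.eqv hv).1, ?_, by simp; omega, by simp; omega⟩
      rw [wordElt_cons, he, eqv_elt hv, wordElt_cons, toGen_linv]; simp
    · refine ⟨a :: w', ⟨hr, hd⟩, by rw [wordElt_cons, wordElt_cons, he], by simpa using hl, ?_⟩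
      intro h
      have hw := hl' (by simpa using h)
      exact ⟨hw, fun h' => hd (h'.of_eqv (red_elt_eqv hw hr he))⟩

theorem exists_word (w : List (ArtinGroup n M)) (h : ∀ a ∈ w, a ∈ genSet n M) :
    ∃ w' : List (Letter n), w'.length = w.length ∧ wordElt n M w' = w.prod := by
  induction w with
  | nil => exact ⟨[], rfl, rfl⟩
  | cons a w ih =>
    obtain ⟨w', h1, h2⟩ := ih (fun b hb => h b (List.mem_cons_of_mem _ hb))
    obtain ⟨i, hi⟩ := h a (by simp)
    rcases hi with hi | hi
    · exact ⟨(i, true) :: w', by simp [h1], by rw [wordElt_cons, h2]; simp [toGen, hi]⟩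
    · exact ⟨(i, false) :: w', by simp [h1], by rw [wordElt_cons, h2]; simp [toGen, hi]⟩

theorem toGen_mem (a : Letter n) : toGen n M a ∈ genSet n M := by
  refine ⟨a.1, ?_⟩
  unfold toGen; split_ifs <;> simp

theorem ell_red {w} (hr : Red S w) : ℓA n M (wordElt n M w) = w.length := by
  unfold ℓA wordLength
  apply le_antisymm
  · apply Nat.sInf_le
    refine ⟨w.map (toGen n M), ?_, by simp, rfl⟩
    intro a ha
    obtain ⟨b, -, rfl⟩ := List.mem_map.1 ha
    exact toGen_mem b
  · apply le_csInf
    · refine ⟨w.length, w.map (toGen n M), ?_, by simp, rfl⟩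
      intro a ha
      obtain ⟨b, -, rfl⟩ := List.mem_map.1 ha
      exact toGen_mem b
    · rintro N ⟨l, h1, h2, h3⟩
      obtain ⟨w1, h4, h5⟩ := exists_word l h1
      obtain ⟨w2, h6, h7, h8, -⟩ := exists_red S w1
      have := (red_elt_eqv hr h6 (by rw [← h7, h5, h3])).length
      omega

variable (S) in
theorem geodesic_iff {w : List (Letter n)} : IsGeodesic n M w ↔ Red S w := by
  constructor
  · intro h
    obtain ⟨w', h1, h2, h3, h4⟩ := exists_red S w
    apply h4
    have := ell_red h1
    rw [← h2] at this
    exact this.symm.trans h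
  · intro h; exact ell_red h

theorem exists_word_of_elt (g : ArtinGroup n M) : ∃ w, wordElt n M w = g := by
  have hg : g ∈ Subgroup.closure (Set.range (PresentedGroup.of (rels := artinRels n M))) := by
    rw [PresentedGroup.closure_range_of]; trivial
  induction hg using Subgroup.closure_induction_left with
  | one => exact ⟨[], rfl⟩
  | mul_left x hx y _ ih =>
    obtain ⟨w, rfl⟩ := ih
    obtain ⟨i, rfl⟩ := hx
    exact ⟨(i, true) :: w, by rw [wordElt_cons]; rfl⟩
  | inv_mul_cancel x hx y _ ih =>
    obtain ⟨w, rfl⟩ := ih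
    obtain ⟨i, rfl⟩ := hx
    exact ⟨(i, false) :: w, by rw [wordElt_cons]; rfl⟩

theorem exists_word_of_Gij {i j : Fin n} {g : ArtinGroup n M} (hg : g ∈ Gij n M i j) :
    ∃ w, IJ i j w ∧ wordElt n M w = g := by
  unfold Gij at hg
  induction hg using Subgroup.closure_induction_left with
  | one => exact ⟨[], IJ.nil, rfl⟩
  | mul_left x hx y _ ih =>
    obtain ⟨w, hI, rfl⟩ := ih
    rcases hx with rfl | rfl
    · exact ⟨(i, true) :: w, hI.cons (Or.inl rfl), by rw [wordElt_cons]; rfl⟩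
    · exact ⟨(j, true) :: w, hI.cons (Or.inr rfl), by rw [wordElt_cons]; rfl⟩
  | inv_mul_cancel x hx y _ ih =>
    obtain ⟨w, hI, rfl⟩ := ih
    rcases hx with rfl | rfl
    · exact ⟨(i, false) :: w, hI.cons (Or.inl rfl), by rw [wordElt_cons]; rfl⟩
    · exact ⟨(j, false) :: w, hI.cons (Or.inr rfl), by rw [wordElt_cons]; rfl⟩

theorem mem_Gij {i j : Fin n} {w} (h : IJ i j w) : wordElt n M w ∈ Gij n M i j := by
  induction w with
  | nil => exact one_mem _
  | cons a w ih =>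
    rw [wordElt_cons]
    refine mul_mem ?_ (ih h.tail)
    have h1 : gen n M a.1 ∈ Gij n M i j := by
      apply Subgroup.subset_closure
      rcases h a (by simp) with h1 | h1 <;> simp [h1]
    unfold toGen
    split_ifs
    · exact h1
    · exact inv_mem h1

end Artin
end ArtinRD

namespace ArtinRD

section Tail
variable {ι : Type} {M : ι → ι → ℕ∞} {S : Sys ι M}

theorem desc_same {a b : ι × Bool} {w} (hr : Red S w) (ha : Desc S a w) (hb : Desc S b w)
    (h : a.1 = b.1) : a = b := by
  obtain ⟨v, hv⟩ := ha
  obtain ⟨u, hu⟩ := hb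
  rcases (HN_all _ _ _ le_rfl (hr.eqv hv) (hv.symm.trans hu)).2 with hT | ⟨a', x, b', y, h1, h2, h3⟩
  · simp at hT
  · obtain ⟨rfl, rfl⟩ := List.cons.inj h1
    obtain ⟨rfl, rfl⟩ := List.cons.inj h2
    rcases h3 with h3 | h3
    · exact h3.1
    · exact absurd h h3.1

/-! inverse words -/

def winv (α : List (ι × Bool)) : List (ι × Bool) := (α.map linv).reverse

theorem winv_winv (α : List (ι × Bool)) : winv (winv α) = α := by
  have : (linv ∘ linv : ι × Bool → ι × Bool) = id := funext linv_linv
  simp [winv, List.map_reverse, this]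

theorem winv_append (α β : List (ι × Bool)) : winv (α ++ β) = winv β ++ winv α := by
  simp [winv]

theorem E_winv_left {i j : ι} (α : List (ι × Bool)) : S.E i j (winv α ++ α) [] := by
  induction α with
  | nil => exact S.refl _ _ _
  | cons a α ih =>
    have h1 : winv (a :: α) ++ a :: α = winv α ++ (linv a :: a :: α) := by simp [winv]
    rw [h1]
    refine S.trans (S.app (S.refl _ _ _) ?_) ih
    have := S.E_inv i j (linv a) α
    rwa [linv_linv] at this

theorem E_winv_right {i j : ι} (α : List (ι × Bool)) : S.E i j (α ++ winv α) [] := by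
  have := E_winv_left (S := S) (i := i) (j := j) (winv α)
  rwa [winv_winv] at this

theorem E_winv {i j : ι} {α β} (h : S.E i j α β) : S.E i j (winv α) (winv β) := by
  have h1 : S.E i j (winv α ++ (β ++ winv β)) (winv α) := by
    have := S.app (S.refl i j (winv α)) (E_winv_right (S := S) (i := i) (j := j) β)
    rwa [List.append_nil] at this
  have h2 : S.E i j ((winv α ++ β) ++ winv β) (winv β) := by
    have h3 : S.E i j (winv α ++ β) [] :=
      S.trans (S.app (S.refl _ _ _) (S.symm h)) (E_winv_left α)
    exact S.app h3 (S.refl i j (winv β))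
  rw [List.append_assoc] at h2
  exact S.trans (S.symm h1) h2

theorem len_winv_le {i j : ι} (hij : i ≠ j) (α : List (ι × Bool)) :
    S.len i j (winv α) ≤ S.len i j α := by
  obtain ⟨γ, hγ, hE⟩ := exists_geo (S := S) hij α
  rw [S.E_len hE, hγ.2.2, S.E_len (E_winv hE)]
  refine (len_le i j _).trans ?_
  simp [winv]

theorem IJ_winv {i j : ι} {α} (h : IJ i j α) : IJ i j (winv α) := by
  intro a ha
  simp only [winv, List.mem_reverse, List.mem_map] at ha
  obtain ⟨b, hb, rfl⟩ := ha
  exact h b hb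

theorem Geo.winv {i j : ι} {α} (h : Geo S i j α) : Geo S i j (winv α) := by
  refine ⟨h.1, IJ_winv h.2.1, ?_⟩
  have h1 := len_winv_le (S := S) h.1 α
  have h2 := len_winv_le (S := S) h.1 (ArtinRD.winv α)
  rw [winv_winv] at h2
  have h3 : (ArtinRD.winv α).length = α.length := by simp [ArtinRD.winv]
  rw [h3, ← h.2.2]; omega

/-- two tails with the same name have the same sign -/
theorem tail_sign {i j : ι} {h u u'} {a : ι × Bool} {r r' : ℕ} (hr : 1 ≤ r) (hr' : 1 ≤ r')
    (hg : Geo S i j (u ++ List.replicate r a)) (hg' : Geo S i j (u' ++ List.replicate r' (linv a)))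
    (hE : S.E i j h (u ++ List.replicate r a)) (hE' : S.E i j h (u' ++ List.replicate r' (linv a))) :
    False := by
  obtain ⟨r, rfl⟩ : ∃ k, r = k + 1 := ⟨r - 1, by omega⟩
  obtain ⟨r', rfl⟩ : ∃ k, r' = k + 1 := ⟨r' - 1, by omega⟩
  have h1 := hg.winv
  have h2 := hg'.winv
  have h3 := E_winv (S.trans (S.symm hE) hE')
  have e : ∀ (b : ι × Bool) k z, winv (z ++ List.replicate (k + 1) b)
      = linv b :: (List.replicate k (linv b) ++ winv z) := by
    intro b k z
    have : List.replicate k (linv b) ++ [linv b] = linv b :: List.replicate k (linv b) := by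
      rw [← List.replicate_succ', List.replicate_succ]
    rw [← List.cons_append, ← this]
    simp [winv, List.replicate_succ]
  rw [e] at h1 h2 h3
  rw [e] at h3
  exact D0_lemma h1 h2 h3 (by rw [linv_linv]; exact linv_ne a) rfl

theorem tailW {i j : ι} (hij : i ≠ j) {h v u w'} (hr : Red S (u ++ w'))
    (hhI : IJ i j h) (hv : NoD S i j v) (he : Eqv S (u ++ w') (h ++ v)) (hI : IJ i j u)
    (hw : ∀ c w'', w' = c :: w'' → c.1 ≠ i ∧ c.1 ≠ j) :
    S.E i j h u ∨ ∃ (a : ι × Bool) (r : ℕ) (c : ι × Bool), (a.1 = i ∨ a.1 = j) ∧ 1 ≤ r ∧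
      S.E i j h (u ++ List.replicate r a) ∧ Geo S i j (u ++ List.replicate r a) ∧
      c.1 ≠ i ∧ c.1 ≠ j ∧ Desc S c (List.replicate r a ++ v) := by
  by_cases hd : NoD S i j w'
  · left
    exact S.symm (uniq (HN_all _) hij le_rfl hr he hI hhI hd hv).1
  right
  unfold NoD at hd
  push Not at hd
  obtain ⟨a, ha, hda⟩ := hd
  obtain ⟨c, w'', rfl⟩ : ∃ c w'', w' = c :: w'' := by
    cases w' with
    | nil => exact absurd hda (not_desc_nil a)
    | cons c w'' => exact ⟨c, w'', rfl⟩
  obtain ⟨hci, hcj⟩ := hw c w'' rfl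
  have hrw := hr.suffix
  obtain ⟨r, w1, e1, hn1⟩ := strip (S := S) a (c :: w'')
  have hr1 := strip_pos e1 hn1 hda
  have hR1 := hrw.eqv e1
  obtain ⟨η, v2, e2, hη, hv2⟩ := decomp (HN_all _) hij le_rfl hR1.suffix
  have e3 := e1.trans (e2.appl (List.replicate r a))
  have hR2 := hrw.eqv e3
  have hn2 : ¬ Desc S a (η ++ v2) := fun h => hn1 (h.of_eqv e2.symm)
  have hη0 : η = [] := by
    by_contra hne
    rcases ha with ha | ha
    · obtain ⟨d, hd, hdd⟩ := next_letter hR2 hr1 hn2 hη.2.1.comm hne ha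
      exact lemmaS (HN_all _) (i := j) (j := i) (k := c.1) hij.symm hcj.symm hci.symm le_rfl hrw ha rfl hd hr1
        (Desc.cons _ _) e3 hn2 hdd
    · obtain ⟨d, hd, hdd⟩ := next_letter hR2 hr1 hn2 hη.2.1 hne ha
      exact lemmaS (HN_all _) (i := i) (j := j) (k := c.1) hij hci.symm hcj.symm le_rfl hrw ha rfl hd hr1
        (Desc.cons _ _) e3 hn2 hdd
  subst hη0
  rw [List.nil_append] at e3
  have e4 := e3.appl u
  rw [← List.append_assoc] at e4
  have hR4 := hr.eqv e4
  have hI4 : IJ i j (u ++ List.replicate r a) := hI.append (IJ.rep ha r)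
  have hU := uniq (HN_all _) hij le_rfl hR4 (e4.symm.trans he) hI4 hhI hv2 hv
  refine ⟨a, r, c, ha, hr1, S.symm hU.1, geoPrefix hij hR4 hI4, hci, hcj, ?_⟩
  exact (Desc.cons c w'').of_eqv (e3.trans (hU.2.appl _))

theorem desc_len {i j : ι} (hij : i ≠ j) {e : ι × Bool} {η v} (hr : Red S (η ++ v)) (hη : Geo S i j η)
    (hv : NoD S i j v) (he : e.1 = i ∨ e.1 = j) (hd : Desc S e (η ++ v)) :
    S.len i j (linv e :: η) + 1 = S.len i j η := by
  obtain ⟨x, hx⟩ := hd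
  have hR := hr.eqv hx
  obtain ⟨ξ, y, e2, hξ, hy⟩ := decomp (HN_all _) hij le_rfl hR.1
  have hU := uniq (HN_all _) hij le_rfl hr (hx.trans (e2.cons e)) (h' := e :: ξ) hη.2.1
    (hξ.2.1.cons he) hv hy
  have hR2 : Red S ((e :: ξ) ++ y) := hr.eqv (hx.trans (e2.cons e))
  have hG := geoPrefix hij hR2 (hξ.2.1.cons he)
  have h1 : S.E i j (linv e :: η) ξ := by
    have h2 := S.E_inv i j (linv e) ξ
    rw [linv_linv] at h2
    exact S.trans (S.cons hU.1) h2
  rw [S.E_len h1, hξ.2.2, S.E_len hU.1, hG.2.2]; rfl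

theorem diff_name (hsymm : ∀ i j, M i j = M j i) (hlarge : ∀ i j, i ≠ j → 3 ≤ M i j)
    (h33m : ¬ ∃ i j k : ι, i ≠ j ∧ i ≠ k ∧ j ≠ k ∧ M i j = 3 ∧ M i k = 3 ∧ M j k < ⊤)
    {i j : ι} (hij : i ≠ j) {a b c c' : ι × Bool} {r t : ℕ} {v}
    (ha : a.1 = i) (hb : b.1 = j) (hr : 1 ≤ r) (ht : 1 ≤ t)
    (hv : NoD S i j v) (hR : Red S (List.replicate r a ++ v)) (hR' : Red S (List.replicate t b ++ v))
    (hci : c.1 ≠ i) (hcj : c.1 ≠ j) (hci' : c'.1 ≠ i) (hcj' : c'.1 ≠ j)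
    (hd : Desc S c (List.replicate r a ++ v)) (hd' : Desc S c' (List.replicate t b ++ v)) : False := by
  subst ha hb
  obtain ⟨d, t1, g2, e, p, g3, k1, k2, k3, k4, k5, k6, k7, k8, k9⟩ :=
    LKg (HN_all _) le_rfl hR hci hd hr (Eqv.refl _) (hv a (Or.inl rfl))
  obtain ⟨d', t1', g2', e', p', g3', k1', k2', k3', k4', k5', k6', k7', k8', k9'⟩ :=
    LKg (HN_all _) le_rfl hR' hcj' hd' ht (Eqv.refl _) (hv b (Or.inr rfl))
  have hvR := hR.suffix
  have hdv := desc_rep k3 k2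
  have hdv' := desc_rep k3' k2'
  have he := desc_rep k7 k6
  have he' := desc_rep k7' k6'
  by_cases hcc : c.1 = c'.1
  · obtain rfl : d = d' := desc_same hvR hdv hdv' (by rw [k1, k1', hcc])
    obtain ⟨-, hg⟩ := strip_uniq (HN_all _) le_rfl (hvR.eqv k3) (k3.symm.trans k3') k4 k4'
    have hgR := (hvR.eqv k3).suffix
    have hfin : M a.1 b.1 < ⊤ := by
      rw [lt_top_iff_ne_top]
      intro htop
      obtain ⟨η, y, e2, hη, hy⟩ := decomp (HN_all _) hij le_rfl hgR
      exact S.D3 (a := linv e) (b := linv e') hij htop k5 k5'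
        (desc_len hij (hgR.eqv e2) hη hy (Or.inl k5) (he.of_eqv e2))
        (desc_len hij (hgR.eqv e2) hη hy (Or.inr k5') (he'.of_eqv (hg.symm.trans e2)))
    have h4 : 4 ≤ M a.1 c.1 ∨ 4 ≤ M b.1 c'.1 := by
      by_contra hcon
      push Not at hcon
      have aux : ∀ x y, x ≠ y → M x y < 4 → M x y = 3 := by
        intro x y hxy hlt
        refine le_antisymm ?_ (hlarge x y hxy)
        have h34 : (4 : ℕ∞) = 3 + 1 := by norm_num
        rw [h34] at hlt
        exact Order.le_of_lt_add_one hlt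
      refine h33m ⟨c.1, a.1, b.1, hci, hcj, hij, ?_, ?_, hfin⟩
      · rw [hsymm]; exact aux _ _ hci.symm hcon.1
      · rw [hsymm, hcc]; exact aux _ _ hcj'.symm hcon.2
    rcases h4 with h4 | h4
    · obtain ⟨f, hf, hdf⟩ := k9 h4
      exact lemmaS (HN_all _) (i := c.1) (j := a.1) (k := b.1) hci hcj hij le_rfl hgR k5 k5' hf k6
        (he'.of_eqv hg.symm) k7 k8 hdf
    · obtain ⟨f, hf, hdf⟩ := k9' h4
      exact lemmaS (HN_all _) (i := c'.1) (j := b.1) (k := a.1) hcj' hci' hij.symm le_rfl (hgR.eqv hg)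
        k5' k5 hf k6' (he.of_eqv hg) k7' k8' hdf
  · exact lemmaS (HN_all _) (i := a.1) (j := c.1) (k := c'.1) hci.symm hci'.symm hcc le_rfl hvR k1 k1' k5 k2
      hdv' k3 k4 he

theorem red_replicate (b : ι × Bool) (k : ℕ) : Red S (List.replicate k b) := by
  induction k with
  | zero => trivial
  | succ k ih =>
    refine ⟨ih, ?_⟩
    cases k with
    | zero => exact not_desc_nil _
    | succ k =>
      intro hd
      exact linv_ne b (desc_same ih hd (Desc.cons _ _) rfl)

theorem rep_eq {a b : ι × Bool} {r r' : ℕ} (hr : 1 ≤ r)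
    (h : Eqv S (List.replicate r a) (List.replicate r' b)) : a = b := by
  have hl := h.length
  simp at hl
  subst hl
  have ha : Desc S a (List.replicate r a) := desc_rep (u' := []) (by simpa using Eqv.refl _) hr
  by_cases hn : a.1 = b.1
  · refine desc_same (red_replicate a r) ha (desc_rep (s := r) (u' := []) (by simpa using h) hr) hn
  · exfalso
    obtain ⟨d, t1, g2, e, p, g3, k1, k2, k3, k4, k5, k6, k7, k8, k9⟩ :=
      LKg (HN_all _) le_rfl (red_replicate a r) hn ha hr (g' := []) (by simpa using h) (not_desc_nil b)
    have := k3.length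
    simp at this; omega

end Tail

theorem wordElt_rep {n : ℕ} {M : Fin n → Fin n → ℕ∞} (a : Letter n) (r : ℕ) :
    wordElt n M (List.replicate r a) = toGen n M a ^ r := by
  simp [wordElt]

theorem lettersIJ_iff {n : ℕ} {M : Fin n → Fin n → ℕ∞} {i j : Fin n} {x : ArtinGroup n M} :
    x ∈ lettersIJ n M i j ↔ ∃ a : Letter n, (a.1 = i ∨ a.1 = j) ∧ toGen n M a = x := by
  constructor
  · rintro (rfl | rfl | rfl | rfl)
    · exact ⟨(i, true), Or.inl rfl, rfl⟩
    · exact ⟨(i, false), Or.inl rfl, rfl⟩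
    · exact ⟨(j, true), Or.inr rfl, rfl⟩
    · exact ⟨(j, false), Or.inr rfl, rfl⟩
  · rintro ⟨⟨k, b⟩, hk, rfl⟩
    rcases hk with rfl | rfl <;> cases b <;> simp [lettersIJ, toGen]

theorem ijPrefix_split {n : ℕ} (i j : Fin n) (w : List (Letter n)) :
    ∃ w', w = ijPrefix n i j w ++ w' ∧ IJ i j (ijPrefix n i j w) ∧
      ∀ c w'', w' = c :: w'' → c.1 ≠ i ∧ c.1 ≠ j := by
  induction w with
  | nil => exact ⟨[], rfl, IJ.nil, by simp⟩
  | cons a w ih =>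
    by_cases h : a.1 = i ∨ a.1 = j
    · obtain ⟨w', h1, h2, h3⟩ := ih
      have e : ijPrefix n i j (a :: w) = a :: ijPrefix n i j w := by
        simp [ijPrefix, h]
      exact ⟨w', by rw [e, List.cons_append, ← h1], by rw [e]; exact h2.cons h, h3⟩
    · have e : ijPrefix n i j (a :: w) = [] := by
        simp [ijPrefix, h]
      refine ⟨a :: w, by rw [e]; rfl, by rw [e]; exact IJ.nil, ?_⟩
      intro c w'' hc
      obtain ⟨rfl, -⟩ := List.cons.inj hc
      exact not_or.1 h

section LDsec
variable {n : ℕ} {M : Fin n → Fin n → ℕ∞} (S : Sys (Fin n) M)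

theorem red_of_geo {i j : Fin n} {h} (hg : Geo S i j h) : Red S h := by
  have := red_geo_app (S := S) (v := []) trivial (fun a _ => not_desc_nil a) hg
  rwa [List.append_nil] at this

theorem LD_words {i j : Fin n} (hij : i ≠ j) {g LD : ArtinGroup n M} (hLD : IsMaxLD n M i j g LD) :
    ∃ h v, Geo S i j h ∧ NoD S i j v ∧ Red S (h ++ v) ∧ wordElt n M h = LD ∧
      wordElt n M (h ++ v) = g := by
  obtain ⟨hG, hdiv, hmax⟩ := hLD
  obtain ⟨α, hα, rfl⟩ := exists_word_of_Gij hG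
  obtain ⟨h, hh, hE⟩ := exists_geo (S := S) hij α
  rw [elt_E hij hα hh.2.1 hE] at hG hdiv hmax ⊢
  obtain ⟨v0, hv0⟩ := exists_word_of_elt ((wordElt n M h)⁻¹ * g)
  obtain ⟨v, hv, hvv, -⟩ := exists_red S v0
  have hhr := red_of_geo S hh
  have hg : wordElt n M (h ++ v) = g := by
    rw [wordElt_append, ← hvv, hv0]; group
  have hR : Red S (h ++ v) := by
    rw [← geodesic_iff S]
    have h1 : ℓA n M (wordElt n M (h ++ v)) = (h ++ v).length := by
      rw [hg, List.length_append, ← ell_red hhr, ← ell_red hv, ← hvv, hv0]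
      exact hdiv.symm
    exact h1
  refine ⟨h, v, hh, ?_, hR, rfl, hg⟩
  rintro a ha ⟨v', hv'⟩
  have e := hv'.appl h
  have e2 : h ++ a :: v' = (h ++ [a]) ++ v' := by simp
  rw [e2] at e
  have hR2 := hR.eqv e
  have hI : IJ i j (h ++ [a]) := hh.2.1.append (IJ.nil.cons ha)
  have hr1 := red_of_geo S (geoPrefix hij hR2 hI)
  have h1 : (wordElt n M (h ++ [a]))⁻¹ * g = wordElt n M v' := by
    rw [← hg, eqv_elt e, wordElt_append (h ++ [a]) v']; group
  have h2 := hmax _ (mem_Gij hI) (by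
    unfold IsLeftDiv
    rw [h1, ell_red hr1, ell_red hR2.suffix, ← hg, ell_red hR, e.length, List.length_append (as := h ++ [a])])
  rw [ell_red hr1, ell_red hhr] at h2
  simp at h2

end LDsec

/-- **Proposition.** In an Artin group of large type satisfying the (3,3,m)-hypothesis,
for `g ∈ G` and `i ≠ j`, either every geodesic word representing `g` has a prefix
representing `LD_{ij}(g)`, or there is a unique letter `a ∈ {x_i^{±1},x_j^{±1}}` and an
element `h' ∈ G(i,j)` such that for every geodesic representative, with `u` the element
of the maximal `{x_i,x_j}`-prefix, one has `LD_{ij}(g) = u a^r` and `u = h' a^s`. -/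
theorem onetail
    (n : ℕ) (hn : 2 ≤ n) (M : Fin n → Fin n → ℕ∞)
    (hsymm : ∀ i j, M i j = M j i)
    (hdiag : ∀ i, M i i = 1)
    (hlarge : ∀ i j, i ≠ j → 3 ≤ M i j)
    (h33m : ¬ ∃ i j k : Fin n, i ≠ j ∧ i ≠ k ∧ j ≠ k ∧
        M i j = 3 ∧ M i k = 3 ∧ M j k < ⊤)
    (g : ArtinGroup n M) (i j : Fin n) (hij : i ≠ j)
    (LD : ArtinGroup n M) (hLD : IsMaxLD n M i j g LD) :
    (∀ w : List (Letter n), IsGeodesic n M w → wordElt n M w = g →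
        ∃ u, u <+: w ∧ wordElt n M u = LD) ∨
    (∃ a ∈ lettersIJ n M i j,
      (∃ h' ∈ Gij n M i j, ∀ w : List (Letter n), IsGeodesic n M w → wordElt n M w = g →
          ∃ r s : ℕ, LD = wordElt n M (ijPrefix n i j w) * a ^ r ∧
            wordElt n M (ijPrefix n i j w) = h' * a ^ s) ∧
      (∀ a' ∈ lettersIJ n M i j,
        (∃ h' ∈ Gij n M i j, ∀ w : List (Letter n), IsGeodesic n M w → wordElt n M w = g →
            ∃ r s : ℕ, LD = wordElt n M (ijPrefix n i j w) * a' ^ r ∧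
              wordElt n M (ijPrefix n i j w) = h' * a' ^ s) → a' = a)) := by
  let S : Sys (Fin n) M := theSys hsymm hlarge
  obtain ⟨h, v, hh, hv, hR, hhLD, hhg⟩ := LD_words S hij hLD
  have key : ∀ w : List (Letter n), IsGeodesic n M w → wordElt n M w = g →
      (S.E i j h (ijPrefix n i j w) ∧ IJ i j (ijPrefix n i j w) ∧ ijPrefix n i j w <+: w) ∨
      ∃ (a : Letter n) (r : ℕ) (c : Letter n), (a.1 = i ∨ a.1 = j) ∧ 1 ≤ r ∧
      S.E i j h (ijPrefix n i j w ++ List.replicate r a) ∧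
      Geo S i j (ijPrefix n i j w ++ List.replicate r a) ∧
      c.1 ≠ i ∧ c.1 ≠ j ∧ Desc S c (List.replicate r a ++ v) := by
    intro w hw hwg
    have hwR := (geodesic_iff S).1 hw
    have he : Eqv S w (h ++ v) := red_elt_eqv hwR hR (hwg.trans hhg.symm)
    obtain ⟨w', h1, h2, h3⟩ := ijPrefix_split i j w
    rw [h1] at hwR he
    rcases tailW hij hwR hh.2.1 hv he h2 h3 with h4 | h4
    · exact Or.inl ⟨h4, h2, ⟨w', h1.symm⟩⟩
    · exact Or.inr h4
  by_cases hall : ∀ w : List (Letter n), IsGeodesic n M w → wordElt n M w = g →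
      S.E i j h (ijPrefix n i j w) ∧ IJ i j (ijPrefix n i j w) ∧ ijPrefix n i j w <+: w
  · left
    intro w hw hwg
    obtain ⟨h1, h2, h3⟩ := hall w hw hwg
    exact ⟨_, h3, by rw [← elt_E hij hh.2.1 h2 h1, hhLD]⟩
  right
  simp only [not_forall] at hall
  obtain ⟨w0, hw0, hwg0, hnot⟩ := hall
  obtain ⟨a, r0, c0, ha, hr0, hE0, hG0, hci, hcj, hdc⟩ := (key w0 hw0 hwg0).resolve_left hnot
  have hR0 : Red S (List.replicate r0 a ++ v) := red_geo_app hR.suffix hv hG0.suffix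
  have main : ∀ w : List (Letter n), IsGeodesic n M w → wordElt n M w = g →
      ∃ r : ℕ, r ≤ h.length ∧ LD = wordElt n M (ijPrefix n i j w) * toGen n M a ^ r := by
    intro w hw hwg
    rcases key w hw hwg with ⟨h1, h2, -⟩ | ⟨b, r, c, hb, hr, hE, hG, hci', hcj', hdc'⟩
    · exact ⟨0, Nat.zero_le _, by rw [pow_zero, mul_one, ← elt_E hij hh.2.1 h2 h1, hhLD]⟩
    · have hRb : Red S (List.replicate r b ++ v) := red_geo_app hR.suffix hv hG.suffix
      have hab : a = b := by
        by_cases hn : a.1 = b.1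
        · by_contra hne
          obtain rfl := eq_linv hn hne
          exact tail_sign hr0 hr hG0 hG hE0 hE
        · exfalso
          rcases ha with ha | ha <;> rcases hb with hb | hb
          · exact hn (ha.trans hb.symm)
          · exact diff_name hsymm hlarge h33m hij ha hb hr0 hr hv hR0 hRb hci hcj hci' hcj' hdc hdc'
          · exact diff_name hsymm hlarge h33m hij hb ha hr hr0 hv hRb hR0 hci' hcj' hci hcj hdc' hdc
          · exact hn (ha.trans hb.symm)
      subst hab
      refine ⟨r, ?_, ?_⟩
      · have := geo_length hh hG hE
        simp at this; omega
      rw [← wordElt_rep, ← wordElt_append, ← elt_E hij hh.2.1 hG.2.1 hE, hhLD]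
  have hLD0 : LD = wordElt n M (ijPrefix n i j w0) * toGen n M a ^ r0 := by
    rw [← wordElt_rep, ← wordElt_append, ← elt_E hij hh.2.1 hG0.2.1 hE0, hhLD]
  have hgen : toGen n M a ∈ Gij n M i j := by
    have := mem_Gij (M := M) (IJ.nil.cons ha : IJ i j [a])
    simpa [wordElt] using this
  refine ⟨toGen n M a, lettersIJ_iff.2 ⟨a, ha, rfl⟩,
    ⟨LD * (toGen n M a ^ h.length)⁻¹, mul_mem hLD.1 (inv_mem (pow_mem hgen _)), ?_⟩, ?_⟩
  · intro w hw hwg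
    obtain ⟨r, hr, h1⟩ := main w hw hwg
    refine ⟨r, h.length - r, h1, ?_⟩
    obtain ⟨k, hk⟩ := Nat.exists_eq_add_of_le hr
    rw [hk, Nat.add_sub_cancel_left, h1, pow_add]
    group
  · rintro a' ha' ⟨h', -, hh'⟩
    obtain ⟨b, hb, rfl⟩ := lettersIJ_iff.1 ha'
    obtain ⟨r, s, h1, -⟩ := hh' w0 hw0 hwg0
    rw [hLD0, mul_right_inj, ← wordElt_rep, ← wordElt_rep] at h1
    rw [rep_eq (S := S) hr0 (red_elt_eqv (red_replicate _ _) (red_replicate _ _) h1)]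

end ArtinRD
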